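/- Let p be an odd prime and let r ≥ 2, a ≥ 0 be integers. There exists an even hyperbolic p-elementary Gram matrix M ∈ M_r(ℤ) of length a if and only if all of the following hold: a ≤ r; r is even; if a is even then r ≡ 2 (mod 4); if a is odd then p ≡ (−1)^{r/2−1} (mod 4); and if r ≢ 2 (mod 8) then r > a > 0. -/

import Mathlib

open Matrix

/-- `M` is the Gram matrix of a hyperbolic lattice, i.e. of signature `(1, r-1)`: over `ℝ`
it is congruent to `diag(1, -1, …, -1)`. -/
def IsHyperbolicGram {r : ℕ} (M : Matrix (Fin r) (Fin r) ℤ) : Prop :=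
  ∃ P : Matrix (Fin r) (Fin r) ℝ, IsUnit P.det ∧
    Pᵀ * (M.map (Int.cast : ℤ → ℝ)) * P =
      Matrix.diagonal (fun i : Fin r => if (i : ℕ) = 0 then (1 : ℝ) else -1)

/-- `M` is `q`-elementary of length `a`: the cokernel of `M : ℤ^r → ℤ^r` is isomorphic to
`(ℤ/qℤ)^a`. -/
def ElemOfLength {r : ℕ} (q a : ℕ) (M : Matrix (Fin r) (Fin r) ℤ) : Prop :=
  Nonempty (((Fin r → ℤ) ⧸ LinearMap.range M.mulVecLin) ≃ₗ[ℤ] (Fin a → ZMod q))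

/-- `δ(M) = 0`, i.e. `zᵀ M⁻¹ z ∈ ℤ` for every integer vector `z`. -/
def DeltaZero {r : ℕ} (M : Matrix (Fin r) (Fin r) ℤ) : Prop :=
  ∀ z : Fin r → ℤ, ∃ n : ℤ,
    (fun i => (z i : ℚ)) ⬝ᵥ ((M.map (Int.cast : ℤ → ℚ))⁻¹ *ᵥ fun i => (z i : ℚ)) = (n : ℚ)

/-!
An even form of odd determinant splits over the localization at `2` into binary blocks of
determinant `≡ -1 (mod 4)`; this makes the rank even and fixes `det M` modulo `4`, which settles
the parity conditions. The signature of an even unimodular form is divisible by `8` by Milgram's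
formula, which reduces to the value of the quadratic Gauss sums by diagonalizing the form over a
sublattice. Applied to `M` when `a = 0` and to `p M⁻¹` when `a = r`, it gives the condition
modulo `8`.

Conversely, forms of rank `2` and `4` and `E₈` are added orthogonally to reach every signature with
small `a`. Intersecting the lattice with the orthogonal complement modulo `p` of a suitable
isotropic vector raises `a` by `2`, and the duality `M ↦ p M⁻¹` exchanges `a` and `r - a`.
-/

section QuadraticGaussSum

open Complex Filter Topology HurwitzZeta

lemma jacobiTheta_neg_inv {τ : ℂ} (hτ : 0 < τ.im) :
    jacobiTheta (-τ⁻¹) = (-I * τ) ^ (1 / 2 : ℂ) * jacobiTheta τ := by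
  have h := jacobiTheta_S_smul ⟨τ, hτ⟩
  rwa [UpperHalfPlane.modular_S_smul, UpperHalfPlane.coe_mk, UpperHalfPlane.coe_mk, inv_neg] at h

lemma jacobiTheta_add_natCast_of_even {N : ℕ} (hN : Even N) (τ : ℂ) :
    jacobiTheta (τ + N) = jacobiTheta τ := by
  obtain ⟨m, rfl⟩ := hN.two_dvd
  have hper : Function.Periodic jacobiTheta 2 := fun τ => by rw [add_comm, jacobiTheta_two_add]
  simpa [mul_comm] using hper.nat_mul m τ

lemma tendsto_exp_neg_mul_atTop {c : ℝ} (hc : 0 < c) :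
    Tendsto (fun t : ℝ => Real.exp (-c * t)) atTop (𝓝 0) :=
  Real.tendsto_exp_atBot.comp (tendsto_id.const_mul_atTop_of_neg (neg_lt_zero.mpr hc))

lemma tendsto_jacobiTheta_mul_I_add (c : ℝ) :
    Tendsto (fun t : ℝ => jacobiTheta (t * I + c)) atTop (𝓝 1) := by
  have him : Tendsto (fun t : ℝ => (t * I + c : ℂ)) atTop (comap im atTop) := by
    simpa [tendsto_comap_iff, Function.comp_def] using! tendsto_id
  have hexp : Tendsto ((fun τ : ℂ => Real.exp (-Real.pi * τ.im)) ∘ fun t : ℝ => (t * I + c : ℂ))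
      atTop (𝓝 0) := by
    simpa [Function.comp_def] using tendsto_exp_neg_mul_atTop Real.pi_pos
  simpa using ((isBigO_at_im_infty_jacobiTheta_sub_one.comp_tendsto him).trans_tendsto
    hexp).add_const 1

lemma tendsto_cosKernel_atTop (a : UnitAddCircle) : Tendsto (cosKernel a) atTop (𝓝 1) := by
  obtain ⟨p, hp, hO⟩ := isBigO_atTop_cosKernel_sub a
  simpa using (hO.trans_tendsto (tendsto_exp_neg_mul_atTop hp)).add_const 1

lemma summable_jacobiTheta {τ : ℂ} (hτ : 0 < τ.im) :
    Summable fun n : ℤ => cexp (Real.pi * I * (n : ℂ) ^ 2 * τ) :=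
  ((summable_jacobiTheta₂_term_iff 0 τ).2 hτ).congr fun n => by simp [jacobiTheta₂_term]

lemma jacobiTheta_inv_add_mul_I {N : ℕ} [NeZero N] (hN : Even N) {x : ℝ} (hx : 0 < x) :
    jacobiTheta ((N : ℂ)⁻¹ + (x / N ^ 2 : ℝ) * I) =
      ∑ k ∈ Finset.range N,
        cexp (Real.pi * I * (k : ℂ) ^ 2 / N) * evenKernel ((k / N : ℝ) : UnitAddCircle) x := by
  obtain ⟨m, hm⟩ := hN.two_dvd
  have hNC : (N : ℂ) ≠ 0 := NeZero.ne _
  have him : 0 < ((N : ℂ)⁻¹ + (x / N ^ 2 : ℝ) * I).im := by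
    have : 0 < x / (N : ℝ) ^ 2 := by have := NeZero.pos N; positivity
    simpa [-ofReal_div] using this
  have hterm (k : ℕ) (n : ℤ) :
      cexp (Real.pi * I * ((n * N + k : ℤ) : ℂ) ^ 2 * ((N : ℂ)⁻¹ + (x / N ^ 2 : ℝ) * I)) =
        cexp (Real.pi * I * (k : ℂ) ^ 2 / N) *
          (Real.exp (-Real.pi * (n + (k / N : ℝ)) ^ 2 * x) : ℝ) := by
    rw [ofReal_exp, ← Complex.exp_add, Complex.exp_eq_exp_iff_exists_int]
    refine ⟨n ^ 2 * m + n * k, ?_⟩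
    have hmC : (N : ℂ) = 2 * m := by exact_mod_cast hm
    push_cast
    field_simp
    linear_combination ((n * N + k) ^ 2 * x : ℂ) * I_sq + (I * N ^ 2 * n ^ 2) * hmC
  let e := (Int.divModEquiv N).trans (Equiv.prodComm _ _)
  have hsum := e.symm.summable_iff.2 (summable_jacobiTheta him)
  rw [jacobiTheta, ← e.symm.tsum_eq]
  refine hsum.tsum_prod.trans ?_
  rw [tsum_fintype, Finset.sum_range]
  refine Finset.sum_congr rfl fun k _ => ?_
  rw [← ((hasSum_ofReal.2 (hasSum_int_evenKernel (k / N) hx)).mul_left _).tsum_eq]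
  exact tsum_congr fun n => hterm k n

lemma jacobiTheta_mul_I_sub_inv {N : ℕ} [NeZero N] (hN : Even N) {t : ℝ} (ht : 0 < t) :
    jacobiTheta (t * I - (N : ℂ)⁻¹) =
      (N / (N * t + I)) ^ (1 / 2 : ℂ) * (((t⁻¹ / N ^ 2 : ℝ) : ℂ) - I / N) ^ (1 / 2 : ℂ) *
        jacobiTheta ((N : ℂ)⁻¹ + (t⁻¹ / N ^ 2 : ℝ) * I) := by
  have hNC : (N : ℂ) ≠ 0 := NeZero.ne _
  have htC : (t : ℂ) ≠ 0 := by exact_mod_cast ht.ne'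
  have hden : (N * t + I : ℂ) ≠ 0 := fun h => by simpa using congrArg im h
  set τ : ℂ := (N : ℂ)⁻¹ + (t⁻¹ / N ^ 2 : ℝ) * I with hτ
  have hτ' : τ = (N * t + I) / (N ^ 2 * t) := by rw [hτ]; push_cast; field_simp
  have hw : -τ⁻¹ + N = N * I / (N * t + I) := by rw [hτ']; field_simp; ring
  have hw_inv : -(N * I / (N * t + I))⁻¹ = t * I - (N : ℂ)⁻¹ := by
    field_simp
    linear_combination (-(N * t) : ℂ) * I_sq
  have hτ_im : 0 < τ.im := by
    have : 0 < t⁻¹ / (N : ℝ) ^ 2 := by have := NeZero.pos N; positivity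
    simpa [hτ, -ofReal_div] using this
  have hw_im : 0 < (N * I / (N * t + I)).im := by
    rw [← hw]
    simpa [Complex.inv_im, neg_div] using div_pos hτ_im (normSq_pos.2 fun h => by simp [h] at hτ_im)
  rw [← hw_inv, jacobiTheta_neg_inv hw_im, ← hw, jacobiTheta_add_natCast_of_even hN,
    jacobiTheta_neg_inv hτ_im, hw, ← mul_assoc]
  congr 3
  · linear_combination (-(N / (N * t + I)) : ℂ) * I_sq
  · rw [hτ']
    push_cast
    field_simp
    linear_combination -I_sq

lemma ofReal_mul_cpow {t : ℝ} (ht : 0 < t) {z : ℂ} (hz : z ≠ 0) (s : ℂ) :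
    (t * z : ℂ) ^ s = (t : ℂ) ^ s * z ^ s := by
  have htC : (t : ℂ) ≠ 0 := by exact_mod_cast ht.ne'
  rw [cpow_def_of_ne_zero (mul_ne_zero htC hz), cpow_def_of_ne_zero htC, cpow_def_of_ne_zero hz,
    log_ofReal_mul ht hz, ofReal_log ht.le, add_mul, Complex.exp_add]

lemma evenKernel_inv (a : UnitAddCircle) {t : ℝ} (ht : 0 < t) :
    (evenKernel a t⁻¹ : ℂ) = (t : ℂ) ^ (1 / 2 : ℂ) * cosKernel a t := by
  rw [evenKernel_functional_equation, Real.inv_rpow ht.le, one_div, inv_inv, one_div t⁻¹, inv_inv,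
    ofReal_mul, ofReal_cpow ht.le]
  norm_num

lemma jacobiTheta_mul_I_sub_inv_eq_sum {N : ℕ} [NeZero N] (hN : Even N) {t : ℝ} (ht : 0 < t) :
    jacobiTheta (t * I - (N : ℂ)⁻¹) =
      (N / (N + (t⁻¹ : ℝ) * I)) ^ (1 / 2 : ℂ) *
        (((t⁻¹ / N ^ 2 : ℝ) : ℂ) - I / N) ^ (1 / 2 : ℂ) *
        ∑ k ∈ Finset.range N,
          cexp (Real.pi * I * (k : ℂ) ^ 2 / N) * cosKernel ((k / N : ℝ) : UnitAddCircle) t := by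
  have hNC : (N : ℂ) ≠ 0 := NeZero.ne _
  have htC : (t : ℂ) ≠ 0 := by exact_mod_cast ht.ne'
  have hden : (N * t + I : ℂ) ≠ 0 := fun h => by simpa using congrArg im h
  have hfactor : (N / (N + (t⁻¹ : ℝ) * I) : ℂ) = t * (N / (N * t + I)) := by
    push_cast
    field_simp
  rw [jacobiTheta_mul_I_sub_inv hN ht, jacobiTheta_inv_add_mul_I hN (inv_pos.2 ht), hfactor,
    ofReal_mul_cpow ht (div_ne_zero hNC hden)]
  simp only [evenKernel_inv _ ht, Finset.mul_sum]
  exact Finset.sum_congr rfl fun k _ => by ring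

lemma neg_I_div_cpow_mul_sum_cexp_sq_div {N : ℕ} [NeZero N] (hN : Even N) :
    (-I / N) ^ (1 / 2 : ℂ) *
      ∑ k ∈ Finset.range N, cexp (Real.pi * I * (k : ℂ) ^ 2 / N) = 1 := by
  have hNC : (N : ℂ) ≠ 0 := NeZero.ne _
  have hinv : Tendsto (fun t : ℝ => ((t⁻¹ : ℝ) : ℂ)) atTop (𝓝 0) := by
    simpa [Function.comp_def] using (continuous_ofReal.tendsto 0).comp tendsto_inv_atTop_zero
  have hfirst : Tendsto (fun t : ℝ => (N / (N + (t⁻¹ : ℝ) * I) : ℂ) ^ (1 / 2 : ℂ)) atTop (𝓝 1) := by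
    have h : Tendsto (fun t : ℝ => (N / (N + (t⁻¹ : ℝ) * I) : ℂ)) atTop (𝓝 1) := by
      have hdiv := (tendsto_const_nhds (x := (N : ℂ))).div
        ((hinv.mul_const I).const_add (N : ℂ)) (by simpa using hNC)
      rwa [zero_mul, add_zero, div_self hNC] at hdiv
    simpa using h.cpow tendsto_const_nhds (by simp)
  have hsecond : Tendsto (fun t : ℝ => (((t⁻¹ / N ^ 2 : ℝ) : ℂ) - I / N) ^ (1 / 2 : ℂ)) atTop
      (𝓝 ((-I / N) ^ (1 / 2 : ℂ))) := by
    have h : Tendsto (fun t : ℝ => ((t⁻¹ / N ^ 2 : ℝ) : ℂ) - I / N) atTop (𝓝 (-I / N)) := by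
      simpa [neg_div] using (hinv.div_const ((N : ℂ) ^ 2)).sub_const (I / N)
    have hslit : -I / (N : ℂ) ∈ slitPlane := by
      simp [mem_slitPlane_iff, Complex.div_im, NeZero.ne N]
    exact (continuousAt_cpow_const hslit).tendsto.comp h
  have hkernel (k : ℕ) := (continuous_ofReal.tendsto 1).comp
    (tendsto_cosKernel_atTop ((k / N : ℝ) : UnitAddCircle))
  have hlimit := (hfirst.mul hsecond).mul (tendsto_finsetSum (Finset.range N) fun k _ =>
    (hkernel k).const_mul (cexp (Real.pi * I * (k : ℂ) ^ 2 / N)))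
  have htheta : Tendsto (fun t : ℝ => jacobiTheta (t * I - (N : ℂ)⁻¹)) atTop (𝓝 1) := by
    simpa [sub_eq_add_neg] using tendsto_jacobiTheta_mul_I_add (-(N : ℝ)⁻¹)
  have heq := (eventually_gt_atTop 0).mono fun t ht => jacobiTheta_mul_I_sub_inv_eq_sum hN ht
  simpa using tendsto_nhds_unique hlimit (htheta.congr' heq)

theorem sum_range_cexp_sq_div {N : ℕ} [NeZero N] (hN : Even N) :
    ∑ k ∈ Finset.range N, cexp (Real.pi * I * (k : ℂ) ^ 2 / N) = √N * cexp (Real.pi / 4 * I) := by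
  have hNpos : (0 : ℝ) < (N : ℝ)⁻¹ := inv_pos.2 (by exact_mod_cast NeZero.pos N)
  have hroot : (-I / N) ^ (1 / 2 : ℂ) = (√N * cexp (Real.pi / 4 * I))⁻¹ := by
    rw [show -I / (N : ℂ) = ((N : ℝ)⁻¹ : ℝ) * -I by push_cast; ring,
      ofReal_mul_cpow hNpos (neg_ne_zero.2 I_ne_zero), mul_inv, ← Complex.exp_neg,
      cpow_def_of_ne_zero (neg_ne_zero.2 I_ne_zero), log_neg_I, Real.sqrt_eq_rpow]
    congr 1
    · rw [← ofReal_inv, ← Real.inv_rpow (Nat.cast_nonneg N), ofReal_cpow hNpos.le]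
      norm_num
    · ring_nf
  have h := neg_I_div_cpow_mul_sum_cexp_sq_div hN
  rw [hroot] at h
  exact (eq_inv_of_mul_eq_one_right h).trans (inv_inv _)

theorem sum_range_natAbs_cexp_sq_div {d : ℤ} (hd : d ≠ 0) (hd2 : Even d) :
    ∑ k ∈ Finset.range d.natAbs, cexp (Real.pi * I * (k : ℂ) ^ 2 / d) =
      √d.natAbs * cexp (Real.pi / 4 * I * d.sign) := by
  have : NeZero d.natAbs := ⟨Int.natAbs_ne_zero.2 hd⟩
  have h := sum_range_cexp_sq_div (Int.natAbs_even.2 hd2)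
  have hdC : (d : ℂ) = d.sign * d.natAbs := by
    rw [← Int.cast_natCast, ← Int.cast_mul, Int.sign_mul_natAbs]
  rcases lt_or_gt_of_ne hd with hneg | hpos
  · have hconj := congrArg (starRingEnd ℂ) h
    rw [hdC, Int.sign_eq_neg_one_of_neg hneg]
    simpa [← Complex.exp_conj, div_neg, neg_div, map_ofNat] using hconj
  · rw [hdC, Int.sign_eq_one_of_pos hpos]
    simpa using h

end QuadraticGaussSum

section Milgram

lemma sum_eq_natCard_of_lagrangian {G K : Type*} [AddCommGroup G] [Fintype G] [Field K]
    [CharZero K] {f : G → K} (H : AddSubgroup G) (hH : ∀ h ∈ H, f h = 1)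
    (hquad : ∀ x, ∀ h ∈ H, ∀ h' ∈ H, f (x + h + h') * f x = f (x + h) * f (x + h'))
    (hperp : ∀ x, (∀ h ∈ H, f (x + h) = f x) → x ∈ H) :
    ∑ x, f x = Nat.card H := by
  classical
  have hcoset (x : G) : ∑ h : H, f (x + h) = if x ∈ H then (Nat.card H : K) else 0 := by
    split_ifs with hx
    · simp [Finset.sum_congr rfl fun (h : H) _ => hH _ (H.add_mem hx h.2)]
    · obtain ⟨h', hh', hne⟩ : ∃ h ∈ H, f (x + h) ≠ f x := by
        simpa using mt (hperp x) hx
      have hshift : ∑ h : H, f (x + h) = ∑ h : H, f (x + h + h') := by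
        simpa [add_assoc] using (Equiv.sum_comp (Equiv.addRight (⟨h', hh'⟩ : H)) fun h : H =>
          f (x + h)).symm
      have htranslate : (∑ h : H, f (x + h)) * f x = (∑ h : H, f (x + h)) * f (x + h') := by
        conv_lhs => rw [hshift]
        simp only [Finset.sum_mul, fun h : H => hquad x h h.2 h' hh']
      by_contra h0
      exact hne (mul_left_cancel₀ h0 htranslate).symm
  have hcard : (Nat.card H : K) ≠ 0 := by exact_mod_cast Nat.card_pos.ne'
  refine mul_left_cancel₀ hcard ?_
  calc (Nat.card H : K) * ∑ x, f x = ∑ h : H, ∑ x, f (x + h) := by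
        have h (h : H) : ∑ x, f (x + h) = ∑ x, f x := Equiv.sum_comp (Equiv.addRight (h : G)) f
        simp [h]
    _ = ∑ x, ∑ h : H, f (x + h) := Finset.sum_comm
    _ = Nat.card H * Nat.card H := by
        simp only [hcoset, ← Finset.sum_filter, Finset.sum_const, nsmul_eq_mul]
        rw [Nat.card_eq_fintype_card, Fintype.card_subtype]

open Complex

/-- The quadratic function `x ↦ exp(πi x² / d)` on `ℤ / d`. It depends only on the residue class
of `x` when `d` is even; in general the representative in `[0, |d|)` is taken. -/
noncomputable def quadExp (d : ℤ) (x : ZMod d.natAbs) : ℂ :=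
  cexp (Real.pi * I * (x.cast : ℤ) ^ 2 / d)

lemma quadExp_intCast {d : ℤ} (hd : d ≠ 0) (hd2 : Even d) (k : ℤ) :
    quadExp d (k : ZMod d.natAbs) = cexp (Real.pi * I * k ^ 2 / d) := by
  obtain ⟨m, hm⟩ := hd2.two_dvd
  obtain ⟨c, hc⟩ : d ∣ ((k : ZMod d.natAbs).cast : ℤ) - k := by
    rw [← Int.natAbs_dvd, ← ZMod.intCast_zmod_eq_zero_iff_dvd]
    simp
  have hdC : (d : ℂ) ≠ 0 := by exact_mod_cast hd
  have hmC : (d : ℂ) = 2 * m := by exact_mod_cast hm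
  rw [quadExp, Complex.exp_eq_exp_iff_exists_int, eq_add_of_sub_eq hc]
  refine ⟨c ^ 2 * m + c * k, ?_⟩
  push_cast
  field_simp
  linear_combination c ^ 2 * d * hmC

lemma sum_quadExp {d : ℤ} [NeZero d.natAbs] (hd2 : Even d) :
    ∑ x, quadExp d x = √d.natAbs * cexp (Real.pi / 4 * I * d.sign) := by
  have hd : d ≠ 0 := Int.natAbs_ne_zero.1 (NeZero.ne _)
  rw [← sum_range_natAbs_cexp_sq_div hd hd2]
  refine (Finset.sum_nbij' (fun k : ℕ => (k : ZMod d.natAbs)) (ZMod.val (n := d.natAbs))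
    ?_ ?_ ?_ ?_ ?_).symm
  · simp
  · simp [ZMod.val_lt]
  · exact fun k hk => ZMod.val_cast_of_lt (Finset.mem_range.1 hk)
  · simp
  · exact fun k _ => by simpa using (quadExp_intCast hd hd2 k).symm

variable {ι : Type*} [Fintype ι]

/-- The pairing `(x, y) ↦ xᵀ D⁻¹ y`. In dual coordinates it is the discriminant pairing of the
lattice with Gram matrix `diag(D)`. -/
noncomputable def discPairing (D x y : ι → ℤ) : ℂ := ∑ i, (x i * y i / D i : ℂ)

lemma discPairing_add_left (D x y z : ι → ℤ) :
    discPairing D (x + y) z = discPairing D x z + discPairing D y z := by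
  simp only [discPairing, ← Finset.sum_add_distrib, Pi.add_apply, Int.cast_add, add_mul, add_div]

lemma discPairing_comm (D x y : ι → ℤ) : discPairing D x y = discPairing D y x := by
  simp only [discPairing, mul_comm]

lemma prod_quadExp_intCast {D : ι → ℤ} (hD : ∀ i, D i ≠ 0) (hD2 : ∀ i, Even (D i)) (x : ι → ℤ) :
    ∏ i, quadExp (D i) (x i) = cexp (Real.pi * I * discPairing D x x) := by
  simp only [quadExp_intCast (hD _) (hD2 _), ← Complex.exp_sum, discPairing, Finset.mul_sum]
  exact congrArg cexp (Finset.sum_congr rfl fun i _ => by ring)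

lemma cexp_discPairing_add (D x y : ι → ℤ) :
    cexp (Real.pi * I * discPairing D (x + y) (x + y)) =
      cexp (Real.pi * I * discPairing D x x) * cexp (Real.pi * I * discPairing D y y) *
        cexp (2 * Real.pi * I * discPairing D x y) := by
  simp only [← Complex.exp_add, discPairing_add_left, discPairing_comm D _ (x + y),
    discPairing_comm D y x]
  ring_nf

lemma map_intCast_transpose_mul_mul {K : Type*} [CommRing K] (M T : Matrix ι ι ℤ) :
    (Tᵀ * M * T).map (Int.cast : ℤ → K) = (T.map Int.cast)ᵀ * M.map Int.cast * T.map Int.cast := by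
  rw [Matrix.map_mul_intCast, Matrix.map_mul_intCast, transpose_map]

variable [DecidableEq ι]

lemma discPairing_eq_dotProduct {D : ι → ℤ} (hD : ∀ i, D i ≠ 0) (x y : ι → ℤ) :
    discPairing D x y =
      (Int.cast ∘ x) ⬝ᵥ (diagonal fun i => (D i : ℂ))⁻¹ *ᵥ (Int.cast ∘ y) := by
  have hinv : (diagonal fun i => (D i : ℂ))⁻¹ = diagonal fun i => (D i : ℂ)⁻¹ :=
    inv_eq_right_inv (by simp [hD])
  simp only [discPairing, hinv, dotProduct, mulVec_diagonal, Function.comp_apply]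
  exact Finset.sum_congr rfl fun i _ => by ring

lemma mul_inv_mul_transpose_of_transpose_mul_mul {K : Type*} [Field K] {A B T D : Matrix ι ι K}
    (hAB : A * B = 1) (hD : D.det ≠ 0) (hT : Tᵀ * A * T = D) : T * D⁻¹ * Tᵀ = B := by
  have hTdet : IsUnit T.det := by
    rw [← hT, det_mul] at hD
    exact (right_ne_zero_of_mul hD).isUnit
  rw [← hT, Matrix.mul_inv_rev, Matrix.mul_inv_rev, inv_eq_right_inv hAB, ← mul_assoc,
    mul_nonsing_inv _ hTdet, one_mul, mul_assoc, nonsing_inv_mul _ (by rwa [det_transpose]),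
    mul_one]

variable {M N T : Matrix ι ι ℤ} {D : ι → ℤ}

lemma discPairing_transpose_mulVec (hD : ∀ i, D i ≠ 0) (hMN : M * N = 1)
    (hT : Tᵀ * M * T = diagonal D) (x y : ι → ℤ) :
    discPairing D (Tᵀ *ᵥ x) (Tᵀ *ᵥ y) = (x ⬝ᵥ N *ᵥ y : ℤ) := by
  have hMNc : M.map (Int.cast : ℤ → ℂ) * N.map Int.cast = 1 := by
    rw [← Matrix.map_mul_intCast, hMN, Matrix.map_one _ Int.cast_zero Int.cast_one]
  have hTc : (T.map (Int.cast : ℤ → ℂ))ᵀ * M.map Int.cast * T.map Int.cast =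
      diagonal fun i => (D i : ℂ) := by
    rw [← map_intCast_transpose_mul_mul, hT, diagonal_map Int.cast_zero]
  have hdet : (diagonal fun i => (D i : ℂ)).det ≠ 0 := by simp [Finset.prod_ne_zero_iff, hD]
  have hcast (A : Matrix ι ι ℤ) (z : ι → ℤ) :
      (Int.cast ∘ (A *ᵥ z) : ι → ℂ) = A.map Int.cast *ᵥ (Int.cast ∘ z) :=
    funext fun i => RingHom.map_mulVec (Int.castRingHom ℂ) A z i
  rw [discPairing_eq_dotProduct hD, hcast, hcast, transpose_map, mulVec_transpose,
    ← dotProduct_mulVec, mulVec_mulVec, mulVec_mulVec,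
    mul_inv_mul_transpose_of_transpose_mul_mul hMNc hdet hTc, ← hcast]
  exact (RingHom.map_dotProduct (Int.castRingHom ℂ) x (N *ᵥ y)).symm

lemma exists_transpose_mulVec_eq_of_discPairing (hD : ∀ i, D i ≠ 0) (hT : Tᵀ * M * T = diagonal D)
    {x : ι → ℤ} (hx : ∀ y, ∃ n : ℤ, discPairing D x (Tᵀ *ᵥ y) = n) : ∃ z, Tᵀ *ᵥ z = x := by
  choose u hu using fun j => hx (Pi.single j 1)
  have hu' (j : ι) : (u j : ℂ) = ∑ k, T j k * (x k / D k : ℂ) := by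
    rw [← hu, discPairing]
    exact Finset.sum_congr rfl fun k _ => by
      simp only [mulVec_single, MulOpposite.op_one, col_transpose, Pi.smul_apply, row_apply,
        one_smul]
      ring
  refine ⟨M *ᵥ u, funext fun i => ?_⟩
  have : ((Tᵀ *ᵥ M *ᵥ u) i : ℂ) = x i := by
    rw [mulVec_mulVec, mulVec, dotProduct, Int.cast_sum]
    calc ∑ j, (((Tᵀ * M) i j * u j : ℤ) : ℂ)
        = ∑ k, ((Tᵀ * M * T) i k : ℂ) * (x k / D k) := by
          simp only [Matrix.mul_apply (M := Tᵀ * M) (N := T), Int.cast_mul, Int.cast_sum, hu',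
            Finset.mul_sum, Finset.sum_mul, ← _root_.mul_assoc]
          exact Finset.sum_comm
      _ = x i := by simp [hT, diagonal_apply, hD, mul_div_cancel₀]
  exact_mod_cast this

lemma exists_transpose_mulVec_eq_of_cexp_eq_one (hD : ∀ i, D i ≠ 0) (hT : Tᵀ * M * T = diagonal D)
    {x : ι → ℤ} (hx : ∀ y, cexp (2 * Real.pi * I * discPairing D x (Tᵀ *ᵥ y)) = 1) :
    ∃ z, Tᵀ *ᵥ z = x :=
  exists_transpose_mulVec_eq_of_discPairing hD hT fun y =>
    have ⟨n, hn⟩ := Complex.exp_eq_one_iff.1 (hx y)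
    ⟨n, mul_left_cancel₀ two_pi_I_ne_zero (hn.trans (mul_comm _ _))⟩

lemma cexp_discPairing_transpose_mulVec (hD : ∀ i, D i ≠ 0) (hMN : M * N = 1)
    (hN : ∀ x : ι → ℤ, Even (x ⬝ᵥ N *ᵥ x)) (hT : Tᵀ * M * T = diagonal D) (y : ι → ℤ) :
    cexp (Real.pi * I * discPairing D (Tᵀ *ᵥ y) (Tᵀ *ᵥ y)) = 1 := by
  obtain ⟨m, hm⟩ := hN y
  rw [discPairing_transpose_mulVec hD hMN hT, hm, Complex.exp_eq_one_iff]
  exact ⟨m, by push_cast; ring⟩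

lemma exists_prod_sum_quadExp_eq_natCast [∀ i, NeZero (D i).natAbs] (hD2 : ∀ i, Even (D i))
    (hMN : M * N = 1) (hN : ∀ x : ι → ℤ, Even (x ⬝ᵥ N *ᵥ x)) (hT : Tᵀ * M * T = diagonal D) :
    ∃ n : ℕ, 0 < n ∧ ∏ i, ∑ x, quadExp (D i) x = n := by
  have hD (i : ι) : D i ≠ 0 := Int.natAbs_ne_zero.1 (NeZero.ne _)
  let red : (ι → ℤ) →+ ∀ i, ZMod (D i).natAbs :=
    AddMonoidHom.mk' (fun x i => (x i : ZMod (D i).natAbs)) fun x y => funext fun i => by simp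
  have hred : Function.Surjective red := fun x =>
    ⟨fun i => (x i).cast, funext fun i => by simp [red]⟩
  let f (x : ∀ i, ZMod (D i).natAbs) : ℂ := ∏ i, quadExp (D i) (x i)
  have hf (x : ι → ℤ) : f (red x) = cexp (Real.pi * I * discPairing D x x) :=
    prod_quadExp_intCast hD hD2 x
  have hadd (x y : ι → ℤ) : f (red x + red (Tᵀ *ᵥ y)) =
      f (red x) * cexp (2 * Real.pi * I * discPairing D x (Tᵀ *ᵥ y)) := by
    rw [← map_add, hf, hf, cexp_discPairing_add,
      cexp_discPairing_transpose_mulVec hD hMN hN hT, mul_one]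
  -- The image of the unimodular lattice in the discriminant group `∏ ℤ / Dᵢ` of the sublattice
  -- spanned by the columns of `T` is Lagrangian.
  let H := (red.comp Tᵀ.mulVecLin.toAddMonoidHom).range
  refine ⟨Nat.card H, Nat.card_pos, ?_⟩
  rw [Finset.prod_univ_sum, Fintype.piFinset_univ]
  refine sum_eq_natCard_of_lagrangian (f := f) H ?_ ?_ ?_
  · rintro _ ⟨y, rfl⟩
    exact (hf _).trans (cexp_discPairing_transpose_mulVec hD hMN hN hT y)
  · intro x
    obtain ⟨x, rfl⟩ := hred x
    rintro _ ⟨y, rfl⟩ _ ⟨z, rfl⟩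
    change f (red x + red (Tᵀ *ᵥ y) + red (Tᵀ *ᵥ z)) * f (red x) =
      f (red x + red (Tᵀ *ᵥ y)) * f (red x + red (Tᵀ *ᵥ z))
    rw [add_assoc, ← map_add, ← mulVec_add, hadd, hadd, hadd, mulVec_add,
      discPairing_comm, discPairing_add_left, mul_add, Complex.exp_add, discPairing_comm D x,
      discPairing_comm D x]
    ring
  · intro x hx
    obtain ⟨x, rfl⟩ := hred x
    have hone (y : ι → ℤ) : cexp (2 * Real.pi * I * discPairing D x (Tᵀ *ᵥ y)) = 1 := by
      have h : f (red x + red (Tᵀ *ᵥ y)) = f (red x) := hx _ ⟨y, rfl⟩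
      rwa [hadd, mul_eq_left₀ (by rw [hf]; exact Complex.exp_ne_zero _)] at h
    obtain ⟨z, rfl⟩ := exists_transpose_mulVec_eq_of_cexp_eq_one hD hT hone
    exact ⟨z, rfl⟩

theorem eight_dvd_sum_sign (hD : ∀ i, D i ≠ 0) (hD2 : ∀ i, Even (D i)) (hMN : M * N = 1)
    (hN : ∀ x : ι → ℤ, Even (x ⬝ᵥ N *ᵥ x)) (hT : Tᵀ * M * T = diagonal D) :
    8 ∣ ∑ i, (D i).sign := by
  have (i : ι) : NeZero (D i).natAbs := ⟨Int.natAbs_ne_zero.2 (hD i)⟩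
  obtain ⟨n, hn, hprod⟩ := exists_prod_sum_quadExp_eq_natCast hD2 hMN hN hT
  simp only [sum_quadExp (hD2 _), Finset.prod_mul_distrib, ← Complex.exp_sum,
    ← Finset.mul_sum] at hprod
  have hnorm : ∏ i, (√(D i).natAbs : ℂ) = n := by
    have hangle : Real.pi / 4 * I * ∑ i, ((D i).sign : ℂ) =
        (Real.pi / 4 * ∑ i, (D i).sign : ℝ) * I := by
      push_cast
      ring
    have h := congrArg norm hprod
    rw [hangle, norm_mul, Complex.norm_exp_ofReal_mul_I, mul_one, norm_natCast, ← ofReal_prod,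
      norm_real, Real.norm_of_nonneg (by positivity)] at h
    exact_mod_cast h
  rw [hnorm, mul_eq_left₀ (by exact_mod_cast hn.ne'), Complex.exp_eq_one_iff] at hprod
  obtain ⟨k, hk⟩ := hprod
  refine ⟨k, ?_⟩
  have h8 : (2 * Real.pi * I / 8 : ℂ) ≠ 0 := div_ne_zero two_pi_I_ne_zero (by norm_num)
  have : (∑ i, ((D i).sign : ℂ)) = 8 * k := mul_left_cancel₀ h8 (by linear_combination hk)
  exact_mod_cast this

end Milgram

section Congruence

variable {R ι κ : Type*} [CommRing R] [Fintype ι] [DecidableEq ι] [Fintype κ] [DecidableEq κ]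

/-- Two Gram matrices are congruent over `R` if they differ by a change of basis. -/
def IsCongr (A B : Matrix ι ι R) : Prop :=
  ∃ P : Matrix ι ι R, IsUnit P.det ∧ Pᵀ * A * P = B

lemma IsCongr.symm {A B : Matrix ι ι R} : IsCongr A B → IsCongr B A := by
  rintro ⟨P, hP, rfl⟩
  refine ⟨P⁻¹, isUnit_nonsing_inv_det P hP, ?_⟩
  calc (P⁻¹)ᵀ * (Pᵀ * A * P) * P⁻¹ = (P * P⁻¹)ᵀ * A * (P * P⁻¹) := by
        simp only [transpose_mul, Matrix.mul_assoc]
    _ = A := by simp [mul_nonsing_inv _ hP]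

lemma IsCongr.trans {A B C : Matrix ι ι R} : IsCongr A B → IsCongr B C → IsCongr A C := by
  rintro ⟨P, hP, rfl⟩ ⟨Q, hQ, rfl⟩
  refine ⟨P * Q, by simpa using hP.mul hQ, ?_⟩
  simp only [transpose_mul, Matrix.mul_assoc]

lemma IsCongr.neg {A B : Matrix ι ι R} : IsCongr A B → IsCongr (-A) (-B) := by
  rintro ⟨P, hP, rfl⟩
  exact ⟨P, hP, by simp⟩

lemma IsCongr.fromBlocks {A B : Matrix ι ι R} {C D : Matrix κ κ R} :
    IsCongr A B → IsCongr C D →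
      IsCongr (Matrix.fromBlocks A 0 0 C) (Matrix.fromBlocks B 0 0 D) := by
  rintro ⟨P, hP, rfl⟩ ⟨Q, hQ, rfl⟩
  refine ⟨Matrix.fromBlocks P 0 0 Q, ?_, ?_⟩
  · rw [det_fromBlocks_zero₁₂]
    exact hP.mul hQ
  · simp [fromBlocks_transpose, fromBlocks_multiply]

lemma IsCongr.submatrix {A B : Matrix ι ι R} (h : IsCongr A B) (e : κ ≃ ι) :
    IsCongr (A.submatrix e e) (B.submatrix e e) := by
  obtain ⟨P, hP, rfl⟩ := h
  exact ⟨P.submatrix e e, by rwa [det_submatrix_equiv_self], by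
    simp only [transpose_submatrix, submatrix_mul_equiv]⟩

lemma IsCongr.equivalent_weightedSumSquares {w w' : ι → R}
    (h : IsCongr (diagonal w) (diagonal w')) :
    (QuadraticMap.weightedSumSquares R w').Equivalent (QuadraticMap.weightedSumSquares R w) := by
  obtain ⟨P, hP, hPw⟩ := h
  refine ⟨⟨P.toLinearEquiv' (invertibleOfIsUnitDet P hP), fun x => ?_⟩⟩
  have hsum (u : ι → R) (y : ι → R) :
      QuadraticMap.weightedSumSquares R u y = y ⬝ᵥ diagonal u *ᵥ y := by
    simp only [QuadraticMap.weightedSumSquares_apply, dotProduct, mulVec_diagonal, smul_eq_mul]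
    exact Finset.sum_congr rfl fun i _ => by ring
  change QuadraticMap.weightedSumSquares R w (P *ᵥ x) = _
  rw [hsum, hsum, ← hPw, ← mulVec_mulVec, ← mulVec_mulVec, dotProduct_mulVec x, vecMul_transpose]

/-- Sylvester's law of inertia. -/
lemma IsCongr.ncard_pos_eq {K : Type*} [Field K] [LinearOrder K] [IsStrictOrderedRing K]
    {w w' : ι → K} (h : IsCongr (diagonal w) (diagonal w')) :
    {i | 0 < w i}.ncard = {i | 0 < w' i}.ncard := by
  simpa only [QuadraticForm.sigPos_weightedSumSquares] using
    h.equivalent_weightedSumSquares.sigPos_eq.symm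

lemma isCongr_smul_self (M : Matrix ι ι ℝ) {c : ℝ} (hc : 0 < c) : IsCongr M (c • M) := by
  refine ⟨√c • 1, ?_, ?_⟩
  · simp [(Real.sqrt_pos.2 hc).ne']
  · simp [smul_smul, Real.mul_self_sqrt hc.le]

lemma isCongr_diagonal_of_mul_pos {s d : ι → ℝ} (h : ∀ i, 0 < s i * d i) :
    IsCongr (diagonal d) (diagonal s) := by
  have hd (i : ι) : d i ≠ 0 := right_ne_zero_of_mul (h i).ne'
  have hpos (i : ι) : 0 < s i / d i := by
    simpa [mul_div_mul_right _ _ (hd i)] using div_pos (h i) (mul_self_pos.2 (hd i))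
  refine ⟨diagonal fun i => √(s i / d i), ?_, ?_⟩
  · simp [Finset.prod_ne_zero_iff, fun i => (Real.sqrt_pos.2 (hpos i)).ne']
  · simp only [diagonal_transpose, diagonal_mul_diagonal]
    congr 1
    ext i
    rw [mul_right_comm, Real.mul_self_sqrt (hpos i).le, div_mul_cancel₀ _ (hd i)]

lemma exists_isCongr_diagonal {K : Type*} [Field K] (h2 : (2 : K) ≠ 0)
    {M : Matrix ι ι K} (hM : M.IsSymm) : ∃ d, IsCongr M (diagonal d) := by
  have := invertibleOfNonzero h2
  have hB : LinearMap.IsSymm (Matrix.toBilin' M) := ⟨fun x y => by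
    rw [Matrix.toBilin'_apply', Matrix.toBilin'_apply', RingHom.id_apply, dotProduct_mulVec,
      ← mulVec_transpose, hM.eq, dotProduct_comm]⟩
  obtain ⟨v, hv⟩ := LinearMap.BilinForm.exists_orthogonal_basis hB
  let e : Fin (Module.finrank K (ι → K)) ≃ ι := Fintype.equivOfCardEq (by simp)
  let b := v.reindex e
  let P := (Pi.basisFun K ι).toMatrix b
  have hP : P * b.toMatrix (Pi.basisFun K ι) = 1 := (Pi.basisFun K ι).toMatrix_mul_toMatrix_flip b
  refine ⟨fun i => b i ⬝ᵥ M *ᵥ b i, P, isUnit_det_of_right_inverse hP, ?_⟩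
  ext i j
  have hentry : (Pᵀ * M * P) i j = b i ⬝ᵥ M *ᵥ b j := by
    rw [Matrix.mul_assoc, Matrix.mul_apply]
    rfl
  rw [hentry, diagonal_apply]
  split_ifs with hij
  · rw [hij]
  · have h := hv (e.symm.injective.ne hij)
    simpa [b, Matrix.toBilin'_apply'] using h

lemma exists_transpose_mul_mul_eq_diagonal {M : Matrix ι ι ℤ} (hM : M.IsSymm) :
    ∃ T : Matrix ι ι ℤ, T.det ≠ 0 ∧ ∃ D, Tᵀ * M * T = diagonal D := by
  obtain ⟨d, P, hP, hd⟩ := exists_isCongr_diagonal (K := ℚ) two_ne_zero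
    (M := M.map Int.cast) (hM.map _)
  have hnum : P.num.map (Int.cast : ℤ → ℚ) = (P.den : ℚ) • P := by
    rw [← P.inv_denom_smul_num, smul_smul, inv_denom_smul_num,
      mul_inv_cancel₀ (by exact_mod_cast P.den_ne_zero), one_smul]
  refine ⟨P.num, fun h0 => ?_, fun i => (P.numᵀ * M * P.num) i i, ?_⟩
  · refine hP.ne_zero ((mul_eq_zero.1 ?_).resolve_left (pow_ne_zero (Fintype.card ι)
      (Nat.cast_ne_zero.2 P.den_ne_zero : (P.den : ℚ) ≠ 0)))
    rw [← det_smul, ← hnum, ← Int.cast_det, h0, Int.cast_zero]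
  · have hdiag : (P.numᵀ * M * P.num).map (Int.cast : ℤ → ℚ) =
        diagonal ((P.den : ℚ) • (P.den : ℚ) • d) := by
      rw [map_intCast_transpose_mul_mul, hnum, diagonal_smul, diagonal_smul, ← hd]
      simp
    ext i j
    rw [diagonal_apply]
    split_ifs with hij
    · rw [hij]
    · simpa [diagonal_apply_ne _ hij] using congrFun₂ hdiag i j

lemma isCongr_map_intCast {K : Type*} [Field K] [CharZero K] {M T B : Matrix ι ι ℤ}
    (hT : T.det ≠ 0) (h : Tᵀ * M * T = B) :
    IsCongr (M.map (Int.cast : ℤ → K)) (B.map Int.cast) := by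
  refine ⟨T.map Int.cast, ?_, ?_⟩
  · rw [← Int.cast_det]
    exact (Int.cast_ne_zero.2 hT).isUnit
  · rw [← map_intCast_transpose_mul_mul, h]

end Congruence

section EvenGram

variable {ι κ : Type*}

/-- The Gram matrices of even lattices. -/
structure IsEvenGram (M : Matrix ι ι ℤ) : Prop where
  isSymm : M.IsSymm
  even_diag : ∀ i, Even (M i i)

namespace IsEvenGram

variable {M N : Matrix ι ι ℤ}

lemma neg (hM : IsEvenGram M) : IsEvenGram (-M) :=
  ⟨hM.isSymm.neg, fun i => (hM.even_diag i).neg⟩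

lemma sub (hM : IsEvenGram M) (hN : IsEvenGram N) : IsEvenGram (M - N) :=
  ⟨hM.isSymm.sub hN.isSymm, fun i => (hM.even_diag i).sub (hN.even_diag i)⟩

lemma smul (hM : IsEvenGram M) (c : ℤ) : IsEvenGram (c • M) :=
  ⟨hM.isSymm.smul c, fun i => (hM.even_diag i).mul_left c⟩

lemma of_smul {c : ℤ} (hc : Odd c) (hM : IsEvenGram (c • M)) : IsEvenGram M := by
  have hc0 : c ≠ 0 := by rintro rfl; simp at hc
  refine ⟨IsSymm.ext fun i j => mul_left_cancel₀ hc0 (hM.isSymm.apply i j), fun i => ?_⟩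
  exact (Int.even_mul.1 (hM.even_diag i)).resolve_left (Int.not_even_iff_odd.2 hc)

lemma submatrix (hM : IsEvenGram M) (f : κ → ι) : IsEvenGram (M.submatrix f f) :=
  ⟨hM.isSymm.submatrix f, fun i => hM.even_diag (f i)⟩

lemma fromBlocks {A : Matrix κ κ ℤ} (hM : IsEvenGram M) (hA : IsEvenGram A) :
    IsEvenGram (Matrix.fromBlocks M 0 0 A) :=
  ⟨hM.isSymm.fromBlocks (by simp) hA.isSymm, Sum.rec hM.even_diag hA.even_diag⟩

variable [Fintype ι]

lemma even_dotProduct_mulVec (hM : IsEvenGram M) (x : ι → ℤ) : Even (x ⬝ᵥ M *ᵥ x) := by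
  rw [← ZMod.intCast_eq_zero_iff_even]
  simp only [dotProduct, mulVec, Finset.mul_sum, Int.cast_sum]
  rw [← Finset.sum_product', Finset.univ_product_univ]
  refine Finset.sum_involution (fun q _ => q.swap) ?_ ?_ (by simp) (by simp)
  · rintro ⟨i, j⟩ -
    rw [Prod.swap_prod_mk, ← Int.cast_add, ZMod.intCast_eq_zero_iff_even, hM.isSymm.apply i j]
    exact ⟨x i * (M i j * x j), by ring⟩
  · rintro ⟨i, j⟩ - hne hfix
    obtain rfl : j = i := by simpa using congrArg Prod.fst hfix
    refine absurd ((ZMod.intCast_eq_zero_iff_even).2 ?_) hne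
    exact ((hM.even_diag j).mul_right _).mul_left _

lemma transpose_mul_mul (hM : IsEvenGram M) (T : Matrix ι κ ℤ) : IsEvenGram (Tᵀ * M * T) := by
  refine ⟨by simp [Matrix.IsSymm, transpose_mul, hM.isSymm.eq, Matrix.mul_assoc], fun j => ?_⟩
  rw [Matrix.mul_assoc, Matrix.mul_apply]
  exact hM.even_dotProduct_mulVec (T.col j)

lemma even_dotProduct_mulVec_of_mul_eq_one [DecidableEq ι] (hM : IsEvenGram M) (hMN : M * N = 1)
    (x : ι → ℤ) : Even (x ⬝ᵥ N *ᵥ x) := by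
  have h := hM.even_dotProduct_mulVec (N *ᵥ x)
  rwa [mulVec_mulVec, hMN, one_mulVec, dotProduct_comm] at h

end IsEvenGram

variable [Fintype ι]

lemma sum_sign_eq_two_mul_ncard_sub_card {D : ι → ℤ} (hD : ∀ i, D i ≠ 0) :
    ∑ i, (D i).sign = 2 * {i | 0 < D i}.ncard - Fintype.card ι := by
  have hsign (i : ι) : (D i).sign = 2 * (if 0 < D i then 1 else 0) - 1 := by
    split_ifs with h
    · simp [Int.sign_eq_one_of_pos h]
    · simp [Int.sign_eq_neg_one_of_neg ((not_lt.1 h).lt_of_ne (hD i))]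
  simp only [hsign, Finset.sum_sub_distrib, ← Finset.mul_sum, Finset.sum_boole]
  simp [Set.ncard_eq_toFinset_card']

theorem IsEvenGram.eight_dvd_signature [DecidableEq ι] {M N : Matrix ι ι ℤ} {s : ι → ℝ}
    (hM : IsEvenGram M) (hMN : M * N = 1) (hs : IsCongr (M.map Int.cast) (diagonal s)) :
    (8 : ℤ) ∣ 2 * {i | 0 < s i}.ncard - Fintype.card ι := by
  obtain ⟨T, hT, D, hTD⟩ := exists_transpose_mul_mul_eq_diagonal hM.isSymm
  have hdet : ∏ i, D i ≠ 0 := by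
    rw [← det_diagonal, ← hTD, det_mul, det_mul, det_transpose]
    exact mul_ne_zero (mul_ne_zero hT (isUnit_det_of_right_inverse hMN).ne_zero) hT
  have hD (i : ι) : D i ≠ 0 := Finset.prod_ne_zero_iff.1 hdet i (Finset.mem_univ i)
  have hD2 (i : ι) : Even (D i) := by
    simpa [hTD] using (hM.transpose_mul_mul T).even_diag i
  have hpos : {i | 0 < D i}.ncard = {i | 0 < s i}.ncard := by
    have h := (isCongr_map_intCast (K := ℝ) hT hTD).symm.trans hs
    rw [diagonal_map Int.cast_zero] at h
    simpa using h.ncard_pos_eq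
  rw [← hpos, ← sum_sign_eq_two_mul_ncard_sub_card hD]
  exact eight_dvd_sum_sign hD hD2 hMN (hM.even_dotProduct_mulVec_of_mul_eq_one hMN) hTD

end EvenGram

section DetModFour

/-- The Schur complement of a block `B`, cleared of denominators. -/
lemma det_pow_mul_det_fromBlocks {R κ ν : Type*} [CommRing R] [Fintype κ] [Fintype ν]
    [DecidableEq κ] [DecidableEq ν] (B : Matrix κ κ R) (X : Matrix κ ν R) (Y : Matrix ν κ R)
    (D : Matrix ν ν R) : B.det ^ Fintype.card ν * (fromBlocks B X Y D).det =
      B.det * (B.det • D - Y * B.adjugate * X).det := by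
  have hmul : fromBlocks 1 0 (-(Y * B.adjugate)) (B.det • (1 : Matrix ν ν R)) *
      fromBlocks B X Y D = fromBlocks B X 0 (B.det • D - Y * B.adjugate * X) := by
    simp [fromBlocks_multiply, Matrix.mul_assoc, adjugate_mul, sub_eq_neg_add]
  simpa [det_fromBlocks_zero₁₂, det_fromBlocks_zero₂₁] using congrArg det hmul

lemma exists_sum_equiv_of_ne.{u} {ι : Type u} [Finite ι] {i j : ι} (hij : i ≠ j) :
    ∃ (κ : Type u) (_ : Fintype κ) (_ : DecidableEq κ) (e : Fin 2 ⊕ κ ≃ ι),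
      e (Sum.inl 0) = i ∧ e (Sum.inl 1) = j := by
  classical
  have := Fintype.ofFinite ι
  have hinj : Function.Injective ![i, j] := by
    intro a b
    fin_cases a <;> fin_cases b <;> simp [hij, hij.symm]
  exact ⟨↥(Set.range ![i, j])ᶜ, inferInstance, inferInstance,
    ((Equiv.ofInjective _ hinj).sumCongr (Equiv.refl _)).trans (Equiv.Set.sumCompl _), rfl, rfl⟩

lemma exists_odd_apply_of_odd_det {ι : Type*} [Fintype ι] [DecidableEq ι] [Nonempty ι]
    {M : Matrix ι ι ℤ} (h : Odd M.det) : ∃ i j, Odd (M i j) := by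
  by_contra! hev
  have hmod : M.map (Int.cast : ℤ → ZMod 2) = 0 := by
    ext i j
    simpa [ZMod.intCast_eq_zero_iff_even] using hev i j
  rw [← Int.not_even_iff_odd, ← ZMod.intCast_eq_zero_iff_even, Int.cast_det, hmod] at h
  exact h det_zero

namespace IsEvenGram

lemma four_dvd_det_fin_two_add_one {B : Matrix (Fin 2) (Fin 2) ℤ} (hB : IsEvenGram B)
    (h : Odd (B 0 1)) : 4 ∣ B.det + 1 := by
  obtain ⟨u, hu⟩ := hB.even_diag 0
  obtain ⟨v, hv⟩ := hB.even_diag 1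
  obtain ⟨w, hw⟩ := h
  rw [det_fin_two, hB.isSymm.apply 0 1, hu, hv, hw]
  exact ⟨u * v - w ^ 2 - w, by ring⟩

lemma adjugate_fin_two {B : Matrix (Fin 2) (Fin 2) ℤ} (hB : IsEvenGram B) :
    IsEvenGram B.adjugate := by
  refine ⟨by rw [Matrix.IsSymm, adjugate_transpose, hB.isSymm.eq], fun i => ?_⟩
  rw [Matrix.adjugate_fin_two]
  fin_cases i
  exacts [hB.even_diag 1, hB.even_diag 0]

lemma exists_schurComplement {κ : Type*} [Fintype κ] [DecidableEq κ]
    {M : Matrix (Fin 2 ⊕ κ) (Fin 2 ⊕ κ) ℤ} (hM : IsEvenGram M)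
    (h : Odd (M (Sum.inl 0) (Sum.inl 1))) (hodd : Odd M.det) :
    ∃ S : Matrix κ κ ℤ, IsEvenGram S ∧ Odd S.det ∧
      (-1) ^ Fintype.card κ * (M.det : ZMod 4) = -S.det := by
  obtain ⟨B, X, Y, D, rfl⟩ : ∃ B X Y D, M = Matrix.fromBlocks B X Y D :=
    ⟨_, _, _, _, (fromBlocks_toBlocks M).symm⟩
  have hB : IsEvenGram B := hM.submatrix Sum.inl
  have hD : IsEvenGram D := hM.submatrix Sum.inr
  obtain rfl : Xᵀ = Y := (isSymm_fromBlocks_iff.1 hM.isSymm).2.1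
  have hB4 := hB.four_dvd_det_fin_two_add_one h
  have hBodd : Odd B.det := by
    rw [Int.odd_iff]
    omega
  have hdet := det_pow_mul_det_fromBlocks B X Xᵀ D
  refine ⟨B.det • D - Xᵀ * B.adjugate * X,
    (hD.smul _).sub (hB.adjugate_fin_two.transpose_mul_mul X),
    (Int.odd_mul.1 (hdet ▸ hBodd.pow.mul hodd)).2, ?_⟩
  have hB4' : (B.det : ZMod 4) = -1 := by
    rw [eq_neg_iff_add_eq_zero, ← Int.cast_one, ← Int.cast_add]
    exact (ZMod.intCast_zmod_eq_zero_iff_dvd _ 4).2 hB4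
  have hdet4 := congrArg (Int.cast : ℤ → ZMod 4) hdet
  rwa [Int.cast_mul, Int.cast_mul, Int.cast_pow, hB4', neg_one_mul] at hdet4

theorem even_card_and_det_mod_four.{u} {ι : Type u} [Fintype ι] [DecidableEq ι] {M : Matrix ι ι ℤ}
    (hM : IsEvenGram M) (hodd : Odd M.det) :
    Even (Fintype.card ι) ∧ (-1) ^ (Fintype.card ι / 2) * (M.det : ZMod 4) = 1 := by
  induction hn : Fintype.card ι using Nat.strong_induction_on generalizing ι with
  | _ n ih =>
  obtain hι | hι := isEmpty_or_nonempty ι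
  · obtain rfl : n = 0 := by simp [← hn]
    simp
  obtain ⟨i, j, hij⟩ := exists_odd_apply_of_odd_det hodd
  have hne : i ≠ j := by
    rintro rfl
    exact Int.not_even_iff_odd.2 hij (hM.even_diag i)
  obtain ⟨κ, _, _, e, rfl, rfl⟩ := exists_sum_equiv_of_ne hne
  rw [← M.det_submatrix_equiv_self e] at hodd ⊢
  rw [← Fintype.card_congr e, Fintype.card_sum, Fintype.card_fin] at hn
  obtain ⟨S, hS, hSodd, hdet⟩ := (hM.submatrix e).exists_schurComplement hij hodd
  obtain ⟨hκ, hS4⟩ := ih (Fintype.card κ) (by omega) hS hSodd rfl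
  rw [hκ.neg_one_pow, one_mul] at hdet
  rw [← hn, Nat.add_div_left _ two_pos, pow_succ, hdet]
  exact ⟨even_two.add hκ, by linear_combination hS4⟩

end IsEvenGram

end DetModFour

section Elementary

variable {ι : Type*} [Fintype ι]

lemma forall_smul_mem_range_mulVecLin_iff [DecidableEq ι] {R : Type*} [CommRing R]
    {M : Matrix ι ι R} (c : R) :
    (∀ x, c • x ∈ LinearMap.range M.mulVecLin) ↔ ∃ N, M * N = c • (1 : Matrix ι ι R) := by
  constructor
  · intro h
    choose f hf using fun i => h (Pi.single i 1)
    refine ⟨(Matrix.of f)ᵀ, ext_of_mulVec_single fun i => ?_⟩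
    rw [← mulVec_mulVec, smul_mulVec, one_mulVec, ← hf, mulVecLin_apply]
    congr 1
    ext j
    simp
  · rintro ⟨N, hN⟩ x
    exact ⟨N *ᵥ x, by rw [mulVecLin_apply, mulVec_mulVec, hN, smul_mulVec, one_mulVec]⟩

lemma natCard_quotient_range_mulVecLin [DecidableEq ι] {M : Matrix ι ι ℤ} (hM : M.det ≠ 0) :
    Nat.card ((ι → ℤ) ⧸ LinearMap.range M.mulVecLin) = M.det.natAbs := by
  have hinj : Function.Injective M.mulVecLin := mulVec_injective_of_det_ne_zero hM
  rw [← Submodule.natAbs_det_equiv _ (LinearEquiv.ofInjective _ hinj), ← LinearMap.det_toLin']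
  rfl

lemma nonempty_linearEquiv_fun_zmod {p a : ℕ} [Fact p.Prime] {G : Type*} [AddCommGroup G]
    (hG : ∀ x : G, p • x = 0) (hcard : Nat.card G = p ^ a) :
    Nonempty (G ≃ₗ[ℤ] (Fin a → ZMod p)) := by
  obtain ⟨_⟩ : Nonempty (Module (ZMod p) G) := ⟨AddCommGroup.zmodModule hG⟩
  have : Finite G := Nat.finite_of_card_ne_zero (hcard ▸ pow_ne_zero a (NeZero.ne p))
  have : Module.Finite (ZMod p) G := Module.Finite.of_finite
  have hrank : Module.finrank (ZMod p) G = a :=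
    Nat.pow_right_injective (Fact.out : p.Prime).two_le
      ((FiniteField.pow_finrank_eq_natCard p G).trans hcard)
  obtain ⟨e⟩ := FiniteDimensional.nonempty_linearEquiv_of_finrank_eq
    (hrank.trans (Module.finrank_fin_fun (ZMod p)).symm)
  exact ⟨e.toAddEquiv.toIntLinearEquiv⟩

variable [DecidableEq ι]

/-- The matrix form of the condition that the cokernel of `M` is isomorphic to `(ℤ / p)^a`. -/
structure IsElementary (p a : ℕ) (M : Matrix ι ι ℤ) : Prop where
  exists_mul_eq : ∃ N : Matrix ι ι ℤ, M * N = (p : ℤ) • 1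
  natAbs_det : M.det.natAbs = p ^ a

lemma IsElementary.det_ne_zero {p a : ℕ} (hp : p.Prime) {M : Matrix ι ι ℤ}
    (hM : IsElementary p a M) : M.det ≠ 0 := by
  rw [← Int.natAbs_ne_zero, hM.natAbs_det]
  exact pow_ne_zero a hp.ne_zero

lemma elemOfLength_iff_isElementary {p : ℕ} (hp : p.Prime) {r a : ℕ}
    {M : Matrix (Fin r) (Fin r) ℤ} (hM : M.det ≠ 0) : ElemOfLength p a M ↔ IsElementary p a M := by
  have : Fact p.Prime := ⟨hp⟩
  refine ⟨fun ⟨e⟩ => ⟨?_, ?_⟩, fun h => nonempty_linearEquiv_fun_zmod (fun x => ?_) ?_⟩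
  · refine (forall_smul_mem_range_mulVecLin_iff _).1 fun x => ?_
    rw [← Submodule.Quotient.mk_eq_zero, Submodule.Quotient.mk_smul, ← e.map_eq_zero_iff, map_smul]
    ext i
    simp
  · rw [← natCard_quotient_range_mulVecLin hM, Nat.card_congr e.toEquiv]
    simp
  · obtain ⟨x, rfl⟩ := Submodule.Quotient.mk_surjective _ x
    rw [← natCast_zsmul, ← Submodule.Quotient.mk_smul, Submodule.Quotient.mk_eq_zero]
    exact (forall_smul_mem_range_mulVecLin_iff _).2 h.exists_mul_eq x
  · rw [natCard_quotient_range_mulVecLin hM, h.natAbs_det]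

lemma natAbs_det_mul_natAbs_det {p : ℕ} {M N : Matrix ι ι ℤ} (hN : M * N = (p : ℤ) • 1) :
    M.det.natAbs * N.det.natAbs = p ^ Fintype.card ι := by
  simpa only [det_mul, det_smul, det_one, mul_one, Int.natAbs_mul, Int.natAbs_pow,
    Int.natAbs_natCast] using congrArg (fun A => (det A).natAbs) hN

lemma IsElementary.length_le_card {p a : ℕ} (hp : p.Prime) {M : Matrix ι ι ℤ}
    (hM : IsElementary p a M) : a ≤ Fintype.card ι := by
  obtain ⟨N, hN⟩ := hM.exists_mul_eq
  rw [← Nat.pow_dvd_pow_iff_le_right hp.one_lt, ← hM.natAbs_det, ← natAbs_det_mul_natAbs_det hN]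
  exact dvd_mul_right _ _

/-- Gram matrices of even `p`-elementary lattices of length `a`, in the real congruence class of
`diag(s)`; the entries of `s` are `±1` in the applications. -/
structure IsEvenElementary (p a : ℕ) (s : ι → ℝ) (M : Matrix ι ι ℤ) : Prop
    extends IsEvenGram M, IsElementary p a M where
  isCongr : IsCongr (M.map Int.cast) (diagonal s)

namespace IsEvenElementary

variable {p a : ℕ} {s : ι → ℝ} {M : Matrix ι ι ℤ}

lemma eight_dvd_signature_of_length_eq_zero (hM : IsEvenElementary p 0 s M) :
    (8 : ℤ) ∣ 2 * {i | 0 < s i}.ncard - Fintype.card ι :=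
  hM.eight_dvd_signature
    (mul_nonsing_inv M (Int.isUnit_iff_natAbs_eq.2 (hM.natAbs_det.trans (pow_zero p)))) hM.isCongr

/-- If `M` is the Gram matrix of `L`, then `p • M⁻¹` is that of the dual of `L`, scaled by `p`. -/
lemma exists_card_sub_length (hp : p.Prime) (hodd : Odd p) (hM : IsEvenElementary p a s M) :
    ∃ N, IsEvenElementary p (Fintype.card ι - a) s N := by
  obtain ⟨N, hN⟩ := hM.exists_mul_eq
  have hprod := natAbs_det_mul_natAbs_det hN
  have hNdet : N.det ≠ 0 := Int.natAbs_ne_zero.1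
    (right_ne_zero_of_mul (hprod.trans_ne (pow_ne_zero _ hp.ne_zero)))
  have hcongr : Nᵀ * M * N = (p : ℤ) • Nᵀ := by
    rw [Matrix.mul_assoc, hN, Matrix.mul_smul, Matrix.mul_one]
  have hNt : IsEvenGram Nᵀ :=
    IsEvenGram.of_smul (c := p) (mod_cast hodd) (hcongr ▸ hM.transpose_mul_mul N)
  have hNM : Nᵀ * M = (p : ℤ) • 1 := by
    rw [← hM.isSymm.eq, ← transpose_mul, hN, transpose_smul, transpose_one]
  have hpN : ((p : ℤ) • Nᵀ).map (Int.cast : ℤ → ℝ) = (p : ℝ) • Nᵀ.map Int.cast := by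
    ext i j
    simp only [map_apply, Matrix.smul_apply, smul_eq_mul, Int.cast_mul, Int.cast_natCast]
  refine ⟨Nᵀ, hNt, ⟨⟨M, hNM⟩, ?_⟩, ?_⟩
  · rw [det_transpose]
    refine Nat.eq_of_mul_eq_mul_left (pow_pos hp.pos a) ?_
    rw [← hM.natAbs_det, hprod, hM.natAbs_det, pow_mul_pow_sub _ (hM.length_le_card hp)]
  · have h := (isCongr_map_intCast (K := ℝ) hNdet hcongr).symm.trans hM.isCongr
    exact (isCongr_smul_self _ (Nat.cast_pos.2 hp.pos)).trans (hpN ▸ h)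

end IsEvenElementary

end Elementary

section Necessity

lemma IsCongr.det_mul_det_pos {ι K : Type*} [Fintype ι] [DecidableEq ι] [Field K] [LinearOrder K]
    [IsStrictOrderedRing K] {A B : Matrix ι ι K} (h : IsCongr A B) (hB : B.det ≠ 0) :
    0 < A.det * B.det := by
  obtain ⟨P, -, rfl⟩ := h
  rw [det_mul, det_mul, det_transpose] at hB ⊢
  rw [show A.det * (P.det * A.det * P.det) = (P.det * A.det) * (P.det * A.det) by ring]
  exact mul_self_pos.2 (left_ne_zero_of_mul hB)

/-- The signs of the standard form of signature `(1, r - 1)`. -/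
def hyperbolicSign (r : ℕ) (i : Fin r) : ℝ := if (i : ℕ) = 0 then 1 else -1

lemma prod_hyperbolicSign {r : ℕ} (hr : 0 < r) : ∏ i, hyperbolicSign r i = (-1) ^ (r - 1) := by
  obtain ⟨k, rfl⟩ := Nat.exists_eq_add_one.2 hr
  simp [Fin.prod_univ_succ, hyperbolicSign]

lemma ncard_hyperbolicSign_pos {r : ℕ} (hr : 0 < r) : {i | 0 < hyperbolicSign r i}.ncard = 1 := by
  refine Set.ncard_eq_one.2 ⟨⟨0, hr⟩, Set.ext fun i => ?_⟩
  simp only [hyperbolicSign, Set.mem_ofPred_eq, Set.mem_singleton_iff, Fin.ext_iff]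
  split_ifs <;> simp_all

variable {p r a : ℕ} {M : Matrix (Fin r) (Fin r) ℤ}

namespace IsEvenElementary

lemma det_eq_neg_pow (hr : 0 < r) (hr2 : Even r) (hM : IsEvenElementary p a (hyperbolicSign r) M) :
    M.det = -(p : ℤ) ^ a := by
  have hprod := prod_hyperbolicSign hr
  rw [(Nat.Even.sub_odd hr hr2 odd_one).neg_one_pow] at hprod
  have hsign := hM.isCongr.det_mul_det_pos (by simp [hprod])
  rw [det_diagonal, hprod, ← Int.cast_det, mul_neg_one, neg_pos, Int.cast_lt_zero] at hsign
  have hdet : (M.det.natAbs : ℤ) = (p : ℤ) ^ a := mod_cast hM.natAbs_det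
  omega

lemma even_card_and_neg_one_pow_mul_pow (hodd : Odd p) (hr : 0 < r)
    (hM : IsEvenElementary p a (hyperbolicSign r) M) :
    Even r ∧ (-1) ^ (r / 2 - 1) * (p : ZMod 4) ^ a = 1 := by
  have hdet : Odd M.det := by
    rw [← Int.natAbs_odd, hM.natAbs_det]
    exact hodd.pow
  obtain ⟨hr2, hmod⟩ := hM.even_card_and_det_mod_four hdet
  rw [Fintype.card_fin] at hr2 hmod
  obtain ⟨k, rfl⟩ := hr2
  refine ⟨⟨k, rfl⟩, ?_⟩
  obtain ⟨k, rfl⟩ := Nat.exists_eq_add_one.2 (show 0 < k by omega)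
  rw [hM.det_eq_neg_pow hr ⟨_, rfl⟩] at hmod
  rw [show (k + 1 + (k + 1)) / 2 = k + 1 by omega] at hmod ⊢
  rw [Nat.add_sub_cancel]
  push_cast at hmod
  linear_combination hmod

end IsEvenElementary

lemma natCast_zmod_four_sq_of_odd (hodd : Odd p) : (p : ZMod 4) ^ 2 = 1 := by
  have h (x : ZMod 4) : (2 * x + 1) ^ 2 = 1 := by decide +revert
  obtain ⟨k, rfl⟩ := hodd
  exact_mod_cast h k

lemma mod_four_eq_two_of_neg_one_pow_mul_pow (hodd : Odd p) (hr : 0 < r) (hr2 : Even r)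
    (h : (-1) ^ (r / 2 - 1) * (p : ZMod 4) ^ a = 1) (ha : Even a) : r % 4 = 2 := by
  obtain ⟨b, rfl⟩ := ha.two_dvd
  rw [pow_mul, natCast_zmod_four_sq_of_odd hodd, one_pow, mul_one] at h
  have hk : Even (r / 2 - 1) := by
    by_contra hk
    rw [(Nat.not_even_iff_odd.1 hk).neg_one_pow] at h
    exact absurd h (by decide)
  grind

lemma modEq_four_of_neg_one_pow_mul_pow (hodd : Odd p)
    (h : (-1) ^ (r / 2 - 1) * (p : ZMod 4) ^ a = 1) (ha : Odd a) :
    (p : ℤ) ≡ (-1) ^ (r / 2 - 1) [ZMOD 4] := by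
  obtain ⟨b, rfl⟩ := ha
  rw [pow_succ, pow_mul, natCast_zmod_four_sq_of_odd hodd, one_pow, one_mul] at h
  have hsq : ((-1 : ZMod 4) ^ (r / 2 - 1)) * (-1) ^ (r / 2 - 1) = 1 := by simp [← mul_pow]
  refine (ZMod.intCast_eq_intCast_iff _ _ 4).1 ?_
  push_cast
  linear_combination (-1) ^ (r / 2 - 1) * h - (p : ZMod 4) * hsq

lemma IsEvenElementary.mod_eight_eq_two (hp : p.Prime) (hodd : Odd p) (hr : 0 < r)
    (hM : IsEvenElementary p a (hyperbolicSign r) M) (ha : a = 0 ∨ a = r) : r % 8 = 2 := by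
  have h8 : (8 : ℤ) ∣ 2 * {i | 0 < hyperbolicSign r i}.ncard - Fintype.card (Fin r) := by
    obtain rfl | rfl := ha
    · exact hM.eight_dvd_signature_of_length_eq_zero
    · obtain ⟨N, hN⟩ := hM.exists_card_sub_length hp hodd
      rw [Fintype.card_fin, Nat.sub_self] at hN
      exact hN.eight_dvd_signature_of_length_eq_zero
  rw [ncard_hyperbolicSign_pos hr, Fintype.card_fin] at h8
  omega

end Necessity

section Isotropic

variable {ι : Type*} [Fintype ι]

section Rank

variable [DecidableEq ι]

lemma pow_card_dvd_det {R : Type*} [CommRing R] {A : Matrix ι ι R} {c : R} {S : Finset ι}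
    (h : ∀ i, ∀ j ∈ S, c ∣ A i j) : c ^ S.card ∣ A.det := by
  have hcol (i j : ι) : ∃ b, A i j = b * if j ∈ S then c else 1 := by
    split_ifs with hj
    · exact (h i j hj).imp fun b hb => hb.trans (mul_comm c b)
    · exact ⟨A i j, (mul_one _).symm⟩
  choose B hB using hcol
  have hA : A = Matrix.of B * diagonal fun j => if j ∈ S then c else 1 := by
    ext i j
    rw [mul_diagonal, of_apply, ← hB]
  rw [hA, det_mul, det_diagonal, Finset.prod_ite_mem, Finset.univ_inter, Finset.prod_const]
  exact dvd_mul_left _ _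

lemma exists_det_eq_one_and_mul_apply_eq_zero {K : Type*} [Field K] (A : Matrix ι ι K) :
    ∃ V : Matrix ι ι K, V.det = 1 ∧
      ∃ S : Finset ι, S.card = Fintype.card ι - A.rank ∧ ∀ i, ∀ j ∈ S, (A * V) i j = 0 := by
  classical
  obtain ⟨L, L', D, hD⟩ := Pivot.exists_list_transvec_mul_mul_list_transvec_eq_diagonal A
  set U := (L.map TransvectionStruct.toMatrix).prod
  set V := (L'.map TransvectionStruct.toMatrix).prod
  have hU : IsUnit U.det := TransvectionStruct.det_toMatrix_prod L ▸ isUnit_one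
  have hV : V.det = 1 := TransvectionStruct.det_toMatrix_prod L'
  have hrank : A.rank = Fintype.card {i // D i ≠ 0} := by
    rw [← rank_diagonal, ← hD, rank_mul_eq_left_of_isUnit_det _ _ (hV ▸ isUnit_one),
      rank_mul_eq_right_of_isUnit_det _ _ hU]
  refine ⟨V, hV, Finset.univ.filter fun i => D i = 0, ?_, fun i j hj => ?_⟩
  · rw [hrank, Fintype.card_subtype_compl, Nat.sub_sub_self (Fintype.card_subtype_le _),
      Fintype.card_subtype]
  · have hAV : A * V = U⁻¹ * diagonal D := by
      rw [← hD, Matrix.mul_assoc, nonsing_inv_mul_cancel_left _ _ hU]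
    rw [hAV, mul_diagonal, (Finset.mem_filter.1 hj).2, mul_zero]

lemma pow_card_sub_rank_dvd_det {p : ℕ} [Fact p.Prime] (M : Matrix ι ι ℤ) :
    (p : ℤ) ^ (Fintype.card ι - (M.map (Int.cast : ℤ → ZMod p)).rank) ∣ M.det := by
  obtain ⟨V, hV, S, hS, hMV⟩ :=
    exists_det_eq_one_and_mul_apply_eq_zero (M.map (Int.cast : ℤ → ZMod p))
  obtain ⟨Q, rfl⟩ : ∃ Q : Matrix ι ι ℤ, Q.map Int.cast = V :=
    ⟨V.map fun x => (ZMod.intCast_surjective x).choose,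
      ext fun i j => (ZMod.intCast_surjective (V i j)).choose_spec⟩
  have hcop : IsCoprime ((p : ℤ) ^ S.card) Q.det := by
    refine ((Prime.coprime_iff_not_dvd (Nat.prime_iff_prime_int.1 Fact.out)).2 fun hdvd =>
      one_ne_zero (α := ZMod p) ?_).pow_left
    rw [← hV, ← Int.cast_det, (ZMod.intCast_zmod_eq_zero_iff_dvd _ p).2 hdvd]
  rw [← hS]
  refine hcop.dvd_of_dvd_mul_right ?_
  rw [← det_mul]
  refine pow_card_dvd_det fun i j hj => (ZMod.intCast_zmod_eq_zero_iff_dvd _ p).1 ?_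
  rw [← hMV i j hj, ← Matrix.map_mul_intCast, map_apply]

end Rank

lemma exists_mul_sq_add_mul_sq_add_eq_zero {K : Type*} [Field K] [Finite K] (h2 : ringChar K ≠ 2)
    {a b : K} (ha : a ≠ 0) (hb : b ≠ 0) (c : K) : ∃ x y : K, a * x ^ 2 + b * y ^ 2 + c = 0 := by
  have := Fintype.ofFinite K
  open Polynomial in
  obtain ⟨x, y, h⟩ := FiniteField.exists_root_sum_quadratic (f := C a * X ^ 2)
    (g := C b * X ^ 2 + C c) (degree_C_mul_X_pow 2 ha)
    (by rw [degree_add_C] <;> simp [degree_C_mul_X_pow 2 hb])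
    (FiniteField.odd_card_of_char_ne_two h2)
  refine ⟨x, y, ?_⟩
  simpa [add_assoc] using h

lemma exists_dotProduct_mulVec_eq_zero {K : Type*} [Field K] [Finite K] (h2 : ringChar K ≠ 2)
    {M : Matrix ι ι K} (hM : M.IsSymm) (hrank : 3 ≤ M.rank) :
    ∃ u, u ⬝ᵥ M *ᵥ u = 0 ∧ M *ᵥ u ≠ 0 := by
  classical
  obtain ⟨d, P, hP, hd⟩ := exists_isCongr_diagonal (Ring.two_ne_zero h2) hM
  have hcard : 2 < (Finset.univ.filter fun i => d i ≠ 0).card := by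
    rwa [← Fintype.card_subtype, ← rank_diagonal, ← hd, rank_mul_eq_left_of_isUnit_det _ _ hP,
      rank_mul_eq_right_of_isUnit_det _ _ (by rwa [det_transpose])]
  obtain ⟨i, k, l, hi, hk, hl, hik, hil, hkl⟩ := Finset.two_lt_card_iff.1 hcard
  simp only [Finset.mem_filter, Finset.mem_univ, true_and] at hi hk hl
  obtain ⟨x, y, hxy⟩ := exists_mul_sq_add_mul_sq_add_eq_zero h2 hi hk (d l)
  set u : ι → K := x • Pi.single i 1 + y • Pi.single k 1 + Pi.single l 1 with hu
  have hmul (w : ι → K) : Pᵀ *ᵥ (M *ᵥ (P *ᵥ w)) = diagonal d *ᵥ w := by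
    rw [← hd, mulVec_mulVec, mulVec_mulVec]
  refine ⟨P *ᵥ u, ?_, fun h0 => hl ?_⟩
  · rw [dotProduct_comm, dotProduct_mulVec, ← mulVec_transpose, hmul, ← hxy, hu]
    simp only [mulVec_add, mulVec_smul, mulVec_single, MulOpposite.op_one, col_diagonal, one_smul,
      dotProduct_add, dotProduct_smul, dotProduct_single, Pi.add_apply, Pi.smul_apply,
      Pi.single_eq_same, smul_eq_mul, ne_eq, hik, not_false_eq_true, Pi.single_eq_of_ne, mul_zero,
      add_zero, hil, mul_one, hik.symm, zero_add, hkl, hil.symm, hkl.symm, add_left_inj]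
    ring
  · have hl0 := congrFun (hmul u) l
    rw [h0, mulVec_zero, mulVec_diagonal, hu] at hl0
    simpa [hil.symm, hkl.symm] using hl0.symm

lemma exists_dvd_dotProduct_mulVec_and_dvd_apply_sub_one {p : ℕ} [Fact p.Prime] (hodd : Odd p)
    {M : Matrix ι ι ℤ} (hM : M.IsSymm) (hrank : 3 ≤ (M.map (Int.cast : ℤ → ZMod p)).rank) :
    ∃ w j, (p : ℤ) ∣ w ⬝ᵥ M *ᵥ w ∧ (p : ℤ) ∣ (M *ᵥ w) j - 1 := by
  have h2 : ringChar (ZMod p) ≠ 2 := by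
    rw [ZMod.ringChar_zmod_n]
    exact hodd.ne_two_of_dvd_nat dvd_rfl
  obtain ⟨u, hu, hMu⟩ := exists_dotProduct_mulVec_eq_zero h2 (hM.map _) hrank
  obtain ⟨j, hj⟩ := Function.ne_iff.1 hMu
  obtain ⟨w, hw⟩ : ∃ w : ι → ℤ,
      Int.cast ∘ w = ((M.map (Int.cast : ℤ → ZMod p) *ᵥ u) j)⁻¹ • u :=
    ⟨_, funext fun i => (ZMod.intCast_surjective _).choose_spec⟩
  have hcast (i : ι) : ((M *ᵥ w) i : ZMod p) = (M.map (Int.cast : ℤ → ZMod p) *ᵥ Int.cast ∘ w) i :=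
    RingHom.map_mulVec (Int.castRingHom (ZMod p)) M w i
  refine ⟨w, j, ?_, ?_⟩ <;> rw [← ZMod.intCast_zmod_eq_zero_iff_dvd]
  · refine (RingHom.map_dotProduct (Int.castRingHom (ZMod p)) w (M *ᵥ w)).trans ?_
    rw [show Int.castRingHom (ZMod p) ∘ (M *ᵥ w) = _ from funext hcast]
    change (Int.cast ∘ w) ⬝ᵥ _ = _
    rw [hw, mulVec_smul, dotProduct_smul, smul_dotProduct, hu, smul_zero, smul_zero]
  · rw [Int.cast_sub, hcast, hw, mulVec_smul, Pi.smul_apply, smul_eq_mul, inv_mul_cancel₀ hj,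
      Int.cast_one, sub_self]

lemma exists_dvd_dotProduct_mulVec_and_apply_eq_one [DecidableEq ι] {p : ℕ} [Fact p.Prime]
    (hodd : Odd p) {M N : Matrix ι ι ℤ} (hM : M.IsSymm) (hN : M * N = (p : ℤ) • 1)
    (hrank : 3 ≤ (M.map (Int.cast : ℤ → ZMod p)).rank) :
    ∃ v j, (p : ℤ) ∣ v ⬝ᵥ M *ᵥ v ∧ (M *ᵥ v) j = 1 := by
  obtain ⟨w, j, hw, m, hm⟩ := exists_dvd_dotProduct_mulVec_and_dvd_apply_sub_one hodd hM hrank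
  set z := N *ᵥ Pi.single j 1 with hz
  have hMz : M *ᵥ z = (p : ℤ) • Pi.single j 1 := by
    rw [hz, mulVec_mulVec, hN, smul_mulVec, one_mulVec]
  have hMv : M *ᵥ (w - m • z) = M *ᵥ w - (p : ℤ) • m • Pi.single j 1 := by
    rw [mulVec_sub, mulVec_smul, hMz, smul_comm]
  refine ⟨w - m • z, j, ?_, ?_⟩
  · have hzM (v : ι → ℤ) : z ⬝ᵥ M *ᵥ v = p * v j := by
      rw [dotProduct_mulVec, ← mulVec_transpose, hM.eq, hMz, smul_dotProduct,
        single_one_dotProduct, smul_eq_mul]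
    rw [sub_dotProduct, smul_dotProduct, hzM, hMv, dotProduct_sub, dotProduct_smul]
    exact (hw.sub (dvd_mul_right _ _)).sub ((dvd_mul_right _ _).mul_left m)
  · rw [hMv, Pi.sub_apply, Pi.smul_apply, Pi.smul_apply, Pi.single_eq_same, smul_eq_mul,
      smul_eq_mul, mul_one, ← hm, sub_sub_cancel]

end Isotropic

section Sublattice

variable {ι R : Type*} [DecidableEq ι] [CommRing R] {c : ι → R} {j : ι}

/-- If `c j = 1`, the columns form a basis of the submodule `{u | d ∣ c ⬝ᵥ u}`: this is the identity
matrix with row `j` replaced by `d` in column `j` and `-c i` in the other columns. -/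
def dvdDotProductBasis (d : R) (c : ι → R) (j : ι) : Matrix ι ι R :=
  1 + vecMulVec (Pi.single j 1) (d • Pi.single j 1 - c)

variable [Fintype ι] {d : R}

lemma det_dvdDotProductBasis (hc : c j = 1) : (dvdDotProductBasis d c j).det = d := by
  rw [dvdDotProductBasis, vecMulVec_eq Unit, det_one_add_replicateCol_mul_replicateRow]
  simp [hc]

lemma exists_dvdDotProductBasis_mulVec_eq (hc : c j = 1) {u : ι → R} (hu : d ∣ c ⬝ᵥ u) :
    ∃ y, dvdDotProductBasis d c j *ᵥ y = u := by
  obtain ⟨t, ht⟩ := hu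
  refine ⟨u + (t - u j) • Pi.single j 1, ?_⟩
  have hdot : (d • Pi.single j 1 - c) ⬝ᵥ (u + (t - u j) • Pi.single j 1) = u j - t := by
    simp only [dotProduct_add, sub_dotProduct, smul_dotProduct, single_dotProduct, one_mul,
      smul_eq_mul, ht, dotProduct_smul, dotProduct_single, Pi.sub_apply, Pi.smul_apply,
      Pi.single_eq_same, mul_one, hc]
    ring
  rw [dvdDotProductBasis, add_mulVec, one_mulVec, vecMulVec_mulVec, hdot, op_smul_eq_smul]
  module

lemma transpose_dvdDotProductBasis_mulVec (x : ι → R) :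
    (dvdDotProductBasis d c j)ᵀ *ᵥ x = x + x j • (d • Pi.single j 1 - c) := by
  rw [dvdDotProductBasis, transpose_add, transpose_one, add_mulVec, one_mulVec, transpose_vecMulVec,
    vecMulVec_mulVec, single_one_dotProduct, op_smul_eq_smul]

end Sublattice

section IsotropicSublattice

variable {ι : Type*} [Fintype ι] [DecidableEq ι] {p : ℕ}

lemma exists_transpose_mul_mul_mul_eq_smul_one {M N : Matrix ι ι ℤ} (hM : M.IsSymm)
    (hN : M * N = (p : ℤ) • 1) {v : ι → ℤ} {j : ι} (hv : (p : ℤ) ∣ v ⬝ᵥ M *ᵥ v)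
    (hj : (M *ᵥ v) j = 1) :
    ∃ N', (dvdDotProductBasis (p : ℤ) (M *ᵥ v) j)ᵀ * M *
      dvdDotProductBasis (p : ℤ) (M *ᵥ v) j * N' = (p : ℤ) • 1 := by
  refine (forall_smul_mem_range_mulVecLin_iff _).1 fun x => ?_
  set w := x - x j • Pi.single j 1 with hw
  set u := N *ᵥ w + x j • v with hu
  have hMu : M *ᵥ u = (p : ℤ) • w + x j • M *ᵥ v := by
    rw [hu, mulVec_add, mulVec_mulVec, hN, smul_mulVec, one_mulVec, mulVec_smul]
  have hdvd : (p : ℤ) ∣ M *ᵥ v ⬝ᵥ u := by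
    rw [dotProduct_comm, dotProduct_mulVec, ← mulVec_transpose, hM.eq, hMu, add_dotProduct,
      smul_dotProduct, smul_dotProduct, dotProduct_comm (M *ᵥ v)]
    exact (dvd_mul_right _ _).add (hv.mul_left _)
  obtain ⟨y, hy⟩ := exists_dvdDotProductBasis_mulVec_eq hj hdvd
  have hcoeff : ((p : ℤ) • w + x j • M *ᵥ v) j = x j := by
    simp [hj, hw]
  refine ⟨y, ?_⟩
  rw [mulVecLin_apply, ← mulVec_mulVec, ← mulVec_mulVec, hy, hMu,
    transpose_dvdDotProductBasis_mulVec, hcoeff, hw]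
  module

variable {a : ℕ} {M : Matrix ι ι ℤ}

lemma IsElementary.three_le_rank (hp : p.Prime) (ha : a + 3 ≤ Fintype.card ι)
    (hM : IsElementary p a M) : 3 ≤ (M.map (Int.cast : ℤ → ZMod p)).rank := by
  have : Fact p.Prime := ⟨hp⟩
  have h := Int.natAbs_dvd_natAbs.2 (pow_card_sub_rank_dvd_det (p := p) M)
  rw [hM.natAbs_det, Int.natAbs_pow, Int.natAbs_natCast,
    Nat.pow_dvd_pow_iff_le_right hp.one_lt] at h
  omega

lemma IsEvenElementary.exists_length_add_two {s : ι → ℝ} (hp : p.Prime) (hodd : Odd p)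
    (ha : a + 3 ≤ Fintype.card ι) (hM : IsEvenElementary p a s M) :
    ∃ M', IsEvenElementary p (a + 2) s M' := by
  have : Fact p.Prime := ⟨hp⟩
  obtain ⟨N, hN⟩ := hM.exists_mul_eq
  obtain ⟨v, j, hv, hj⟩ := exists_dvd_dotProduct_mulVec_and_apply_eq_one hodd hM.isSymm hN
    (hM.three_le_rank hp ha)
  set T := dvdDotProductBasis (p : ℤ) (M *ᵥ v) j
  have hT : T.det = p := det_dvdDotProductBasis hj
  refine ⟨Tᵀ * M * T, hM.transpose_mul_mul T,
    ⟨exists_transpose_mul_mul_mul_eq_smul_one hM.isSymm hN hv hj, ?_⟩, ?_⟩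
  · rw [det_mul, det_mul, det_transpose, hT, Int.natAbs_mul, Int.natAbs_mul, hM.natAbs_det,
      Int.natAbs_natCast]
    ring
  · exact (isCongr_map_intCast (hT ▸ mod_cast hp.ne_zero) rfl).symm.trans hM.isCongr

end IsotropicSublattice

section DirectSum

variable {ι κ : Type*} [Fintype ι] [DecidableEq ι] [Fintype κ] [DecidableEq κ] {p a b : ℕ}

namespace IsElementary

variable {M : Matrix ι ι ℤ} {A : Matrix κ κ ℤ}

lemma of_natAbs_det (ha : a ≤ 1) (hM : M.det.natAbs = p ^ a) : IsElementary p a M := by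
  have hdvd : M.det ∣ p := by
    rw [← Int.natAbs_dvd_natAbs, hM, Int.natAbs_natCast]
    simpa using pow_dvd_pow p ha
  obtain ⟨c, hc⟩ := hdvd
  exact ⟨⟨c • M.adjugate, by rw [Matrix.mul_smul, mul_adjugate, smul_smul, hc, mul_comm]⟩, hM⟩

lemma neg (hM : IsElementary p a M) : IsElementary p a (-M) := by
  obtain ⟨⟨N, hN⟩, hdet⟩ := hM
  exact ⟨⟨-N, by rw [neg_mul_neg, hN]⟩, by simp [det_neg, Int.natAbs_mul, Int.natAbs_pow, hdet]⟩

lemma fromBlocks (hM : IsElementary p a M) (hA : IsElementary p b A) :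
    IsElementary p (a + b) (Matrix.fromBlocks M 0 0 A) := by
  obtain ⟨⟨N, hN⟩, hMdet⟩ := hM
  obtain ⟨⟨B, hB⟩, hAdet⟩ := hA
  refine ⟨⟨Matrix.fromBlocks N 0 0 B, ?_⟩, ?_⟩
  · rw [← fromBlocks_one, fromBlocks_smul]
    simp [fromBlocks_multiply, hN, hB]
  · rw [det_fromBlocks_zero₂₁, Int.natAbs_mul, hMdet, hAdet, pow_add]

lemma submatrix (hM : IsElementary p a M) (e : κ ≃ ι) : IsElementary p a (M.submatrix e e) := by
  obtain ⟨⟨N, hN⟩, hdet⟩ := hM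
  refine ⟨⟨N.submatrix e e, ?_⟩, by rw [det_submatrix_equiv_self, hdet]⟩
  rw [submatrix_mul_equiv, hN, submatrix_smul, Pi.smul_apply, Pi.smul_apply, submatrix_one_equiv]

end IsElementary

namespace IsEvenElementary

variable {s : ι → ℝ} {t : κ → ℝ} {M : Matrix ι ι ℤ} {A : Matrix κ κ ℤ}

lemma of_transpose_mul_mul_eq_diagonal (hM : IsEvenGram M) (hE : IsElementary p a M)
    {T : Matrix ι ι ℤ} {d : ι → ℤ} (hT : Tᵀ * M * T = diagonal d) (hd : ∀ i, 0 < s i * d i) :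
    IsEvenElementary p a s M := by
  have hdet : T.det ≠ 0 := by
    have hprod : ∏ i, d i ≠ 0 := Finset.prod_ne_zero_iff.2 fun i _ =>
      Int.cast_ne_zero.1 (right_ne_zero_of_mul (hd i).ne')
    rw [← det_diagonal, ← hT, det_mul] at hprod
    exact right_ne_zero_of_mul hprod
  have hcongr := isCongr_map_intCast (K := ℝ) hdet hT
  rw [diagonal_map Int.cast_zero] at hcongr
  exact ⟨hM, hE, hcongr.trans (isCongr_diagonal_of_mul_pos hd)⟩

lemma neg (hM : IsEvenElementary p a s M) : IsEvenElementary p a (-s) (-M) := by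
  refine ⟨hM.toIsEvenGram.neg, hM.toIsElementary.neg, ?_⟩
  have h := hM.isCongr.neg
  rw [diagonal_neg] at h
  rwa [Matrix.map_neg _ Int.cast_neg]

lemma fromBlocks (hM : IsEvenElementary p a s M) (hA : IsEvenElementary p b t A) :
    IsEvenElementary p (a + b) (Sum.elim s t) (Matrix.fromBlocks M 0 0 A) := by
  refine ⟨hM.toIsEvenGram.fromBlocks hA.toIsEvenGram,
    hM.toIsElementary.fromBlocks hA.toIsElementary, ?_⟩
  have h := hM.isCongr.fromBlocks hA.isCongr
  rw [fromBlocks_diagonal] at h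
  simpa [fromBlocks_map] using h

lemma submatrix (hM : IsEvenElementary p a s M) (e : κ ≃ ι) :
    IsEvenElementary p a (s ∘ e) (M.submatrix e e) := by
  refine ⟨hM.toIsEvenGram.submatrix e, hM.toIsElementary.submatrix e, ?_⟩
  have h := hM.isCongr.submatrix e
  rwa [submatrix_diagonal_equiv] at h

end IsEvenElementary

end DirectSum

section Existence

/-- There is an even hyperbolic `p`-elementary lattice of rank `r` and length `a`. -/
def ExistsHyperbolic (p r a : ℕ) : Prop :=
  ∃ M, IsEvenElementary p a (hyperbolicSign r) M

/-- There is an even positive definite `p`-elementary lattice of rank `n` and length `a`. -/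
def ExistsPosDef (p n a : ℕ) : Prop :=
  ∃ M, IsEvenElementary p a (fun _ : Fin n => (1 : ℝ)) M

variable {p r n a b : ℕ}

lemma sumElim_hyperbolicSign_comp (hr : 0 < r) :
    Sum.elim (hyperbolicSign r) (-fun _ => 1) ∘ finSumFinEquiv.symm = hyperbolicSign (r + n) := by
  ext i
  induction i using Fin.addCases <;> simp [hyperbolicSign, hr.ne']

namespace ExistsHyperbolic

lemma add (hr : 0 < r) : ExistsHyperbolic p r a → ExistsPosDef p n b →
    ExistsHyperbolic p (r + n) (a + b) := by
  rintro ⟨M, hM⟩ ⟨A, hA⟩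
  exact ⟨_, sumElim_hyperbolicSign_comp (n := n) hr ▸
    (hM.fromBlocks hA.neg).submatrix finSumFinEquiv.symm⟩

lemma length_add_two (hp : p.Prime) (hodd : Odd p) (ha : a + 3 ≤ r) :
    ExistsHyperbolic p r a → ExistsHyperbolic p r (a + 2) :=
  fun ⟨_, hM⟩ => hM.exists_length_add_two hp hodd (by rwa [Fintype.card_fin])

lemma sub_length (hp : p.Prime) (hodd : Odd p) :
    ExistsHyperbolic p r a → ExistsHyperbolic p r (r - a) :=
  fun ⟨_, hM⟩ => by simpa only [ExistsHyperbolic, Fintype.card_fin] using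
    hM.exists_card_sub_length hp hodd

end ExistsHyperbolic

lemma existsHyperbolic_two {x : ℕ} (ha : a ≤ 1) (h : p ^ a = 4 * x + 1) :
    ExistsHyperbolic p 2 a := by
  have hT : !![2, 0; 1, 1]ᵀ * !![2 * (x : ℤ), 1; 1, -2] * !![2, 0; 1, 1] =
      diagonal ![2 * (4 * (x : ℤ) + 1), -2] := by
    ext i j
    fin_cases i <;> fin_cases j <;> simp [Matrix.mul_apply, Fin.sum_univ_two]
    ring
  refine ⟨_, .of_transpose_mul_mul_eq_diagonal ⟨?_, ?_⟩ (.of_natAbs_det ha ?_) hT ?_⟩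
  · ext i j
    fin_cases i <;> fin_cases j <;> rfl
  · simp [Fin.forall_fin_two]
  · rw [det_fin_two_of, h]
    omega
  · have hx : (0 : ℝ) < 4 * x + 1 := by positivity
    simp [Fin.forall_fin_two, hyperbolicSign, hx]

lemma existsPosDef_two (hp : p % 4 = 3) : ExistsPosDef p 2 1 := by
  obtain ⟨k, rfl⟩ : ∃ k, p = 4 * k + 3 := ⟨p / 4, by omega⟩
  have hT : !![1, -1; 0, 2]ᵀ * !![2, 1; 1, 2 * (k + 1 : ℤ)] * !![1, -1; 0, 2] =
      diagonal ![2, 2 * (4 * k + 3 : ℤ)] := by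
    ext i j
    fin_cases i <;> fin_cases j <;> simp [Matrix.mul_apply, Fin.sum_univ_two]
    ring
  refine ⟨_, .of_transpose_mul_mul_eq_diagonal ⟨?_, ?_⟩ (.of_natAbs_det le_rfl ?_) hT ?_⟩
  · ext i j
    fin_cases i <;> fin_cases j <;> rfl
  · simp [Fin.forall_fin_two]
  · rw [det_fin_two_of, pow_one]
    omega
  · have hk : (0 : ℤ) < 4 * k + 3 := by positivity
    simp [Fin.forall_fin_two, hk]

lemma existsPosDef_four {k l e : ℤ} (hp : 0 < p) (hk : 0 < k)
    (h : (4 * k - 1) * (4 * l - 1) = 4 * e ^ 2 + p) : ExistsPosDef p 4 1 := by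
  let M : Matrix (Fin 4) (Fin 4) ℤ := !![2, 1, 0, 0; 1, 2 * k, 0, e; 0, 0, 2, 1; 0, e, 1, 2 * l]
  -- The Gram–Schmidt basis, cleared of denominators.
  let T : Matrix (Fin 4) (Fin 4) ℤ :=
    !![1, -1, 0, 2 * e; 0, 2, 0, -4 * e; 0, 0, 1, -(4 * k - 1); 0, 0, 0, 2 * (4 * k - 1)]
  have hdet : M.det = p := by
    simp [M, det_succ_row_zero, Fin.sum_univ_succ, Fin.succAbove]
    linear_combination h
  have hT : Tᵀ * M * T = diagonal ![2, 2 * (4 * k - 1), 2, 2 * (4 * k - 1) * p] := by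
    rw [← sub_eq_iff_eq_add'.2 h]
    ext i j
    fin_cases i <;> fin_cases j <;> simp [M, T, Matrix.mul_apply, Fin.sum_univ_four]
    all_goals ring
  refine ⟨M, .of_transpose_mul_mul_eq_diagonal ⟨?_, ?_⟩ (.of_natAbs_det le_rfl ?_) hT ?_⟩
  · ext i j
    fin_cases i <;> fin_cases j <;> rfl
  · simp [Fin.forall_fin_succ, M]
  · rw [hdet, Int.natAbs_natCast, pow_one]
  · have hq : 0 < 4 * k - 1 := by omega
    simp only [one_mul, Int.cast_pos]
    simp [Fin.forall_fin_succ, hp, hq, -Int.sub_pos, -sub_pos]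

lemma existsPosDef_eight : ExistsPosDef p 8 0 := by
  have hT :
      let T : Matrix (Fin 8) (Fin 8) ℤ :=
        !![1, 0, 1, 2, 2, 2, 2, 2;
          0, 1, 0, 3, 3, 3, 3, 3;
          0, 0, 2, 4, 4, 4, 4, 4;
          0, 0, 0, 6, 6, 6, 6, 6;
          0, 0, 0, 0, 5, 5, 5, 5;
          0, 0, 0, 0, 0, 4, 4, 4;
          0, 0, 0, 0, 0, 0, 3, 3;
          0, 0, 0, 0, 0, 0, 0, 2]
      Tᵀ * CartanMatrix.E₈ * T = diagonal ![2, 2, 6, 30, 20, 12, 6, 2] := by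
    decide +kernel
  refine ⟨_, .of_transpose_mul_mul_eq_diagonal ⟨CartanMatrix.E₈_isSymm, fun i => ?_⟩
    (.of_natAbs_det zero_le_one ?_) hT ?_⟩
  · rw [CartanMatrix.E₈_diag]
    exact even_two
  · rw [CartanMatrix.E₈_det, Int.natAbs_one, pow_zero]
  · simp only [one_mul, Int.cast_pos]
    decide

end Existence

section Reciprocity

variable {p q : ℕ}

lemma exists_prime_modEq_three_legendreSym_eq_neg_one [Fact p.Prime] (hp4 : p % 4 = 1) :
    ∃ q : ℕ, q.Prime ∧ q % 4 = 3 ∧ legendreSym p q = -1 := by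
  have hp : p.Prime := Fact.out
  obtain ⟨n, hn⟩ := FiniteField.exists_nonsquare (F := ZMod p) (by rw [ZMod.ringChar_zmod_n]; omega)
  have hcop : Nat.Coprime 4 p :=
    Nat.Coprime.pow_left 2 ((Nat.coprime_primes Nat.prime_two hp).2 (by omega))
  obtain ⟨b, hb4, hbp⟩ := Nat.chineseRemainder hcop 3 n.val
  have hbn : (b : ZMod p) = n := by
    rw [(ZMod.natCast_eq_natCast_iff _ _ _).2 hbp, ZMod.natCast_zmod_val]
  have hb : b.Coprime (4 * p) := by
    refine Nat.Coprime.mul_right (hb4.gcd_eq.trans rfl) ?_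
    rw [← ZMod.isUnit_iff_coprime, hbn, isUnit_iff_ne_zero]
    rintro rfl
    exact hn IsSquare.zero
  obtain ⟨q, -, hq, hqb⟩ :=
    Nat.forall_exists_prime_gt_and_modEq 0 (mul_ne_zero four_ne_zero hp.ne_zero) hb
  refine ⟨q, hq, (hqb.of_mul_right p).trans hb4, (legendreSym.eq_neg_one_iff p).2 ?_⟩
  rwa [Int.cast_natCast, (ZMod.natCast_eq_natCast_iff _ _ _).2 (hqb.of_mul_left 4), hbn]

lemma legendreSym_neg_eq_one [Fact p.Prime] [Fact q.Prime] (hp4 : p % 4 = 1) (hq4 : q % 4 = 3)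
    (h : legendreSym p q = -1) : legendreSym q (-p) = 1 := by
  rw [← neg_one_mul, legendreSym.mul, legendreSym.at_neg_one (by omega),
    ZMod.χ₄_nat_three_mod_four hq4, legendreSym.quadratic_reciprocity_one_mod_four hp4 (by omega),
    h, neg_one_mul, neg_neg]

lemma exists_dvd_two_mul_sq_sub [Fact q.Prime] (hq : Odd q) {n : ℤ} (h : legendreSym q n = 1) :
    ∃ e : ℤ, (q : ℤ) ∣ (2 * e) ^ 2 - n := by
  have hn : (n : ZMod q) ≠ 0 := by
    rw [Ne, ← legendreSym.eq_zero_iff, h]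
    exact one_ne_zero
  obtain ⟨y, hy⟩ := (legendreSym.eq_one_iff q hn).1 h
  have h2 : (2 : ZMod q) ≠ 0 := Ring.two_ne_zero <| by
    rw [ZMod.ringChar_zmod_n]
    exact hq.ne_two_of_dvd_nat dvd_rfl
  obtain ⟨e, he⟩ := ZMod.intCast_surjective (y / 2)
  refine ⟨e, ?_⟩
  rw [← ZMod.intCast_zmod_eq_zero_iff_dvd]
  push_cast
  rw [he, mul_div_cancel₀ _ h2, hy, sq, sub_self]

lemma exists_mul_eq_four_mul_sq_add (hp : p.Prime) (hp4 : p % 4 = 1) :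
    ∃ k l e : ℤ, 0 < k ∧ (4 * k - 1) * (4 * l - 1) = 4 * e ^ 2 + p := by
  have : Fact p.Prime := ⟨hp⟩
  obtain ⟨q, hq, hq4, hqp⟩ := exists_prime_modEq_three_legendreSym_eq_neg_one hp4
  have : Fact q.Prime := ⟨hq⟩
  obtain ⟨e, s, hs⟩ := exists_dvd_two_mul_sq_sub (Nat.odd_iff.2 (by omega))
    (legendreSym_neg_eq_one hp4 hq4 hqp)
  obtain ⟨k, hk⟩ : ∃ k : ℤ, (q : ℤ) = 4 * k - 1 := ⟨(q + 1) / 4, by omega⟩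
  obtain ⟨m, hm⟩ : ∃ m : ℤ, (p : ℤ) = 4 * m + 1 := ⟨p / 4, by omega⟩
  have hs4 : s = 4 * (k * s - e ^ 2 - m) - 1 := by
    rw [hk, hm] at hs
    linear_combination hs
  refine ⟨k, k * s - e ^ 2 - m, e, by omega, ?_⟩
  rw [← hs4, ← hk, ← hs]
  ring

lemma existsPosDef_four_of_mod_four_eq_one (hp : p.Prime) (hp4 : p % 4 = 1) :
    ExistsPosDef p 4 1 :=
  have ⟨_, _, _, hk, h⟩ := exists_mul_eq_four_mul_sq_add hp hp4
  existsPosDef_four hp.pos hk h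

end Reciprocity

section Criterion

variable {p r a : ℕ}

lemma existsHyperbolic_two_zero : ExistsHyperbolic p 2 0 :=
  existsHyperbolic_two (x := 0) zero_le_one rfl

lemma ExistsHyperbolic.add_eight_mul (hr : 0 < r) (h : ExistsHyperbolic p r a) (k : ℕ) :
    ExistsHyperbolic p (r + 8 * k) a := by
  induction k with
  | zero => exact h
  | succ k ih => exact ih.add (by omega) existsPosDef_eight

lemma ExistsHyperbolic.extend {R b : ℕ} (hp : p.Prime) (hodd : Odd p) (hr : 0 < r)
    (h : ExistsHyperbolic p r a) (hrR : r ≤ R) (hR : R % 8 = r % 8) (hab : a ≤ b)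
    (hb : b % 2 = a % 2) (hbR : b < R) : ExistsHyperbolic p R b := by
  obtain ⟨k, rfl⟩ : ∃ k, R = r + 8 * k := ⟨(R - r) / 8, by omega⟩
  obtain ⟨m, rfl⟩ : ∃ m, b = a + 2 * m := ⟨(b - a) / 2, by omega⟩
  clear hb hab
  induction m with
  | zero => exact h.add_eight_mul hr k
  | succ m ih =>
    have hm := (ih (by omega)).length_add_two hp hodd (by omega)
    rwa [add_assoc, ← mul_add_one] at hm

lemma existsHyperbolic_six_two (hp : p.Prime) (hodd : Odd p) : ExistsHyperbolic p 6 2 := by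
  obtain hp4 | hp4 := Nat.odd_mod_four_iff.1 (Nat.odd_iff.1 hodd)
  · exact (existsHyperbolic_two le_rfl (x := p / 4) (by rw [pow_one]; omega)).add two_pos
      (existsPosDef_four_of_mod_four_eq_one hp hp4)
  · have hpos := existsPosDef_two hp4
    exact (existsHyperbolic_two_zero.add two_pos hpos).add four_pos hpos

lemma existsHyperbolic_eight_one (hp : p.Prime) (hp4 : p % 4 = 3) : ExistsHyperbolic p 8 1 := by
  have hodd : Odd p := Nat.odd_iff.2 (by omega)
  have hpos := existsPosDef_two hp4
  have h3 : ExistsHyperbolic p 8 3 :=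
    ((existsHyperbolic_two_zero.add two_pos hpos).add four_pos hpos).add (by norm_num) hpos
  have h7 : ExistsHyperbolic p 8 7 :=
    (h3.length_add_two hp hodd (by norm_num)).length_add_two hp hodd (by norm_num)
  exact h7.sub_length hp hodd

lemma existsHyperbolic_of_even_length (hp : p.Prime) (hodd : Odd p) (har : a ≤ r)
    (hr4 : r % 4 = 2) (ha : a % 2 = 0) (hr8 : r % 8 ≠ 2 → 0 < a ∧ a < r) :
    ExistsHyperbolic p r a := by
  by_cases h2 : r % 8 = 2
  · rcases har.lt_or_eq with har | rfl
    · exact existsHyperbolic_two_zero.extend hp hodd two_pos (by omega) h2 a.zero_le ha har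
    · have h0 : ExistsHyperbolic p a 0 :=
        existsHyperbolic_two_zero.extend hp hodd two_pos (by omega) h2 le_rfl rfl (by omega)
      exact h0.sub_length hp hodd
  · obtain ⟨ha0, har⟩ := hr8 h2
    exact (existsHyperbolic_six_two hp hodd).extend hp hodd (by norm_num) (by omega) (by omega)
      (by omega) ha har

lemma existsHyperbolic_of_mod_four_eq_one (hp : p.Prime) (hp4 : p % 4 = 1) (har : a < r)
    (hr4 : r % 4 = 2) (ha : a % 2 = 1) : ExistsHyperbolic p r a := by
  have hodd : Odd p := Nat.odd_iff.2 (by omega)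
  obtain h2 | h6 : r % 8 = 2 ∨ r % 8 = 6 := by omega
  · exact (existsHyperbolic_two le_rfl (x := p / 4) (by rw [pow_one]; omega)).extend hp hodd
      two_pos (by omega) h2 (by omega) ha har
  · exact (existsHyperbolic_two_zero.add two_pos
      (existsPosDef_four_of_mod_four_eq_one hp hp4)).extend hp hodd (by norm_num) (by omega) h6
      (by omega) ha har

lemma existsHyperbolic_of_mod_four_eq_three (hp : p.Prime) (hp4 : p % 4 = 3) (har : a < r)
    (hr4 : r % 4 = 0) (ha : a % 2 = 1) : ExistsHyperbolic p r a := by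
  have hodd : Odd p := Nat.odd_iff.2 (by omega)
  obtain h4 | h0 : r % 8 = 4 ∨ r % 8 = 0 := by omega
  · exact (existsHyperbolic_two_zero.add two_pos (existsPosDef_two hp4)).extend hp hodd four_pos
      (by omega) h4 (by omega) ha har
  · exact (existsHyperbolic_eight_one hp hp4).extend hp hodd (by norm_num) (by omega) h0 (by omega)
      ha har

theorem ExistsHyperbolic.conditions (hp : p.Prime) (hodd : Odd p) (hr : 0 < r)
    (h : ExistsHyperbolic p r a) :
    a ≤ r ∧ r % 2 = 0 ∧ (a % 2 = 0 → r % 4 = 2) ∧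
      (a % 2 = 1 → (p : ℤ) ≡ (-1) ^ (r / 2 - 1) [ZMOD 4]) ∧ (r % 8 ≠ 2 → 0 < a ∧ a < r) := by
  obtain ⟨M, hM⟩ := h
  obtain ⟨hr2, hdet⟩ := hM.even_card_and_neg_one_pow_mul_pow hodd hr
  have har : a ≤ r := by simpa using hM.length_le_card hp
  refine ⟨har, Nat.even_iff.1 hr2, fun ha => ?_, fun ha => ?_, fun hr8 => ?_⟩
  · exact mod_four_eq_two_of_neg_one_pow_mul_pow hodd hr hr2 hdet (Nat.even_iff.2 ha)
  · exact modEq_four_of_neg_one_pow_mul_pow hodd hdet (Nat.odd_iff.2 ha)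
  · by_contra h
    exact hr8 (hM.mod_eight_eq_two hp hodd hr (by omega))

theorem existsHyperbolic_of_conditions (hp : p.Prime) (hodd : Odd p) (har : a ≤ r)
    (hr2 : r % 2 = 0) (heven : a % 2 = 0 → r % 4 = 2)
    (hoddLength : a % 2 = 1 → (p : ℤ) ≡ (-1) ^ (r / 2 - 1) [ZMOD 4])
    (hr8 : r % 8 ≠ 2 → 0 < a ∧ a < r) : ExistsHyperbolic p r a := by
  rcases Nat.mod_two_eq_zero_or_one a with ha | ha
  · exact existsHyperbolic_of_even_length hp hodd har (heven ha) ha hr8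
  have hp4 := hoddLength ha
  obtain hr4 | hr4 : r % 4 = 2 ∨ r % 4 = 0 := by omega
  · rw [Even.neg_one_pow (Nat.even_iff.2 (by omega)), Int.ModEq] at hp4
    exact existsHyperbolic_of_mod_four_eq_one hp (by omega) (by omega) hr4 ha
  · rw [Odd.neg_one_pow (Nat.odd_iff.2 (by omega)), Int.ModEq] at hp4
    exact existsHyperbolic_of_mod_four_eq_three hp (by omega) (by omega) hr4 ha

theorem exists_gram_iff_existsHyperbolic (hp : p.Prime) :
    (∃ M : Matrix (Fin r) (Fin r) ℤ, M.IsSymm ∧ (∀ i, Even (M i i)) ∧ M.det ≠ 0 ∧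
        IsHyperbolicGram M ∧ ElemOfLength p a M) ↔ ExistsHyperbolic p r a := by
  constructor
  · rintro ⟨M, hsymm, heven, hdet, hhyp, helem⟩
    exact ⟨M, ⟨hsymm, heven⟩, (elemOfLength_iff_isElementary hp hdet).1 helem, hhyp⟩
  · rintro ⟨M, ⟨hsymm, heven⟩, helem, hhyp⟩
    have hdet := helem.det_ne_zero hp
    exact ⟨M, hsymm, heven, hdet, hhyp, (elemOfLength_iff_isElementary hp hdet).2 helem⟩

end Criterion

/-- The Rudakov–Shafarevich existence criterion for even hyperbolic `p`-elementary lattices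
with `p` an odd prime and invariants `(r, a)`. -/
theorem stmt_10 (p : ℕ) (hp : p.Prime) (hodd : Odd p) (r a : ℕ) (hr : 2 ≤ r) :
    (∃ M : Matrix (Fin r) (Fin r) ℤ, M.IsSymm ∧ (∀ i, Even (M i i)) ∧ M.det ≠ 0 ∧
        IsHyperbolicGram M ∧ ElemOfLength p a M) ↔
      (a ≤ r ∧
        r % 2 = 0 ∧
        (a % 2 = 0 → r % 4 = 2) ∧
        (a % 2 = 1 → (p : ℤ) ≡ (-1) ^ (r / 2 - 1) [ZMOD 4]) ∧
        (r % 8 ≠ 2 → (0 < a ∧ a < r))) := by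
  rw [exists_gram_iff_existsHyperbolic hp]
  constructor
  · exact fun h => h.conditions hp hodd (two_pos.trans_le hr)
  · rintro ⟨har, hr2, heven, hoddLength, hr8⟩
    exact existsHyperbolic_of_conditions hp hodd har hr2 heven hoddLength hr8
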